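/- Let Z=(X,Y) ∈ Ω₁ be such that all four eigenvalues λ₁⁺, λ₂⁺, λ₁⁻, λ₂⁻ are non-real (so Z ∈ Ω_ff), and let α = sign ℓ ∈ {−1,1}. Then Z is locally Σ-equivalent near the origin to the piecewise linear vector field Z_ff = (X_ff, Y_ff), where X_ff(x,y) = (αx − y, x + αy) and Y_ff(x,y) = (αx − y, x + αy). -/

import Mathlib

open Set Filter

noncomputable section

/-- Entry (1,1) of the Jacobian matrix of `X` at the origin. -/
noncomputable def jac11 (X : ℝ × ℝ → ℝ × ℝ) : ℝ := (fderiv ℝ X (0, 0) (1, 0)).1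
/-- Entry (1,2) of the Jacobian matrix of `X` at the origin. -/
noncomputable def jac12 (X : ℝ × ℝ → ℝ × ℝ) : ℝ := (fderiv ℝ X (0, 0) (0, 1)).1
/-- Entry (2,1) of the Jacobian matrix of `X` at the origin, i.e. `∂ₓX₂(0,0)`. -/
noncomputable def jac21 (X : ℝ × ℝ → ℝ × ℝ) : ℝ := (fderiv ℝ X (0, 0) (1, 0)).2
/-- Entry (2,2) of the Jacobian matrix of `X` at the origin. -/
noncomputable def jac22 (X : ℝ × ℝ → ℝ × ℝ) : ℝ := (fderiv ℝ X (0, 0) (0, 1)).2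

/-- Determinant of the Jacobian matrix of `X` at the origin. -/
noncomputable def detJ (X : ℝ × ℝ → ℝ × ℝ) : ℝ := jac11 X * jac22 X - jac12 X * jac21 X
/-- Trace of the Jacobian matrix of `X` at the origin. -/
noncomputable def trJ (X : ℝ × ℝ → ℝ × ℝ) : ℝ := jac11 X + jac22 X

/-- The first (complex) eigenvalue of the Jacobian matrix of `X` at the origin. -/
noncomputable def eig1 (X : ℝ × ℝ → ℝ × ℝ) : ℂ :=
  if 0 ≤ trJ X ^ 2 - 4 * detJ X then
    (((trJ X + Real.sqrt (trJ X ^ 2 - 4 * detJ X)) / 2 : ℝ) : ℂ)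
  else
    (((trJ X / 2 : ℝ) : ℂ) + (Real.sqrt (4 * detJ X - trJ X ^ 2) / 2 : ℝ) * Complex.I)

/-- The second (complex) eigenvalue of the Jacobian matrix of `X` at the origin. -/
noncomputable def eig2 (X : ℝ × ℝ → ℝ × ℝ) : ℂ :=
  if 0 ≤ trJ X ^ 2 - 4 * detJ X then
    (((trJ X - Real.sqrt (trJ X ^ 2 - 4 * detJ X)) / 2 : ℝ) : ℂ)
  else
    (((trJ X / 2 : ℝ) : ℂ) - (Real.sqrt (4 * detJ X - trJ X ^ 2) / 2 : ℝ) * Complex.I)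

/-- The quantity ℓ : `Re λ₁⁺/|Im λ₁⁺| + Re λ₁⁻/|Im λ₁⁻|` when both imaginary parts are
nonzero, and `1` otherwise. -/
noncomputable def ellVal (X Y : ℝ × ℝ → ℝ × ℝ) : ℝ :=
  if (eig1 X).im * (eig1 Y).im ≠ 0 then
    (eig1 X).re / |(eig1 X).im| + (eig1 Y).re / |(eig1 Y).im|
  else 1

/-- Membership in Ω₀ : `Z = (X, Y)` is a piecewise `C¹` vector field on the open set `U`
containing the origin, the origin is a zero of both `X` and `Y`, it is non-degenerate for
both, and `∂ₓX₂(0,0) ⬝ ∂ₓY₂(0,0) > 0`. -/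
def InOmega0 (U : Set (ℝ × ℝ)) (X Y : ℝ × ℝ → ℝ × ℝ) : Prop :=
  IsOpen U ∧ (0, 0) ∈ U ∧ ContDiffOn ℝ 1 X U ∧ ContDiffOn ℝ 1 Y U ∧
    X (0, 0) = (0, 0) ∧ Y (0, 0) = (0, 0) ∧ detJ X * detJ Y ≠ 0 ∧ jac21 X * jac21 Y > 0

/-- Membership in Ω₁ : member of Ω₀ with distinct eigenvalues of each Jacobian matrix
and `ℓ ≠ 0`. -/
def InOmega1 (U : Set (ℝ × ℝ)) (X Y : ℝ × ℝ → ℝ × ℝ) : Prop :=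
  InOmega0 U X Y ∧ eig1 X ≠ eig2 X ∧ eig1 Y ≠ eig2 Y ∧ ellVal X Y ≠ 0

/-- `γ` is a solution of `ẋ = X(x)` on the time set `I`. -/
def IsSolutionOn (X : ℝ × ℝ → ℝ × ℝ) (γ : ℝ → ℝ × ℝ) (I : Set ℝ) : Prop :=
  ∀ t ∈ I, HasDerivAt γ (X (γ t)) t

/-- `H` maps orbit arcs of `X` lying in `S` onto orbit arcs of `X'` lying in `S'`,
preserving the direction of time (via an increasing homeomorphism of time intervals). -/
def MapsOrbits (X X' : ℝ × ℝ → ℝ × ℝ) (H : ℝ × ℝ → ℝ × ℝ) (S S' : Set (ℝ × ℝ)) : Prop :=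
  ∀ (γ : ℝ → ℝ × ℝ) (I : Set ℝ), I.OrdConnected → IsSolutionOn X γ I →
    (∀ t ∈ I, γ t ∈ S) →
    ∃ (δ : ℝ → ℝ × ℝ) (J : Set ℝ) (τ : ℝ → ℝ),
      J.OrdConnected ∧ IsSolutionOn X' δ J ∧ (∀ s ∈ J, δ s ∈ S') ∧
      Set.BijOn τ I J ∧ StrictMonoOn τ I ∧ ContinuousOn τ I ∧
      ∀ t ∈ I, H (γ t) = δ (τ t)

/-- Local Σ-equivalence near the origin between the piecewise smooth vector fields
`Z = (X, Y)` and `Z' = (X', Y')`: a homeomorphism `H` between neighborhoods of the origin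
fixing the origin, preserving the switching line `{y = 0}`, and mapping orbit arcs of `X`
(resp. `Y`) in `{y ≥ 0}` (resp. `{y ≤ 0}`) onto orbit arcs of `X'` (resp. `Y'`),
preserving the direction of time, and conversely. -/
def LocalSigmaEquiv (X Y X' Y' : ℝ × ℝ → ℝ × ℝ) : Prop :=
  ∃ (U₀ V₀ : Set (ℝ × ℝ)) (H Hinv : ℝ × ℝ → ℝ × ℝ),
    U₀ ∈ nhds ((0, 0) : ℝ × ℝ) ∧ V₀ ∈ nhds ((0, 0) : ℝ × ℝ) ∧
    ContinuousOn H U₀ ∧ ContinuousOn Hinv V₀ ∧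
    Set.BijOn H U₀ V₀ ∧
    (∀ p ∈ U₀, Hinv (H p) = p) ∧ (∀ q ∈ V₀, H (Hinv q) = q) ∧
    H (0, 0) = (0, 0) ∧
    H '' (U₀ ∩ {p : ℝ × ℝ | p.2 = 0}) = V₀ ∩ {p : ℝ × ℝ | p.2 = 0} ∧
    MapsOrbits X X' H (U₀ ∩ {p : ℝ × ℝ | 0 ≤ p.2}) (V₀ ∩ {p : ℝ × ℝ | 0 ≤ p.2}) ∧
    MapsOrbits Y Y' H (U₀ ∩ {p : ℝ × ℝ | p.2 ≤ 0}) (V₀ ∩ {p : ℝ × ℝ | p.2 ≤ 0}) ∧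
    MapsOrbits X' X Hinv (V₀ ∩ {p : ℝ × ℝ | 0 ≤ p.2}) (U₀ ∩ {p : ℝ × ℝ | 0 ≤ p.2}) ∧
    MapsOrbits Y' Y Hinv (V₀ ∩ {p : ℝ × ℝ | p.2 ≤ 0}) (U₀ ∩ {p : ℝ × ℝ | p.2 ≤ 0})

/-
In logarithmic coordinates `w = log z`, and in a linear chart where the linearization is
multiplication by an eigenvalue `lam`, a focus becomes a Lipschitz field which, after truncation
away from the origin, is uniformly close to the constant `lam`. Its orbits are graphs `re w = s(θ)`
over the angle `θ = im w`, solving a scalar equation with slope close to `re lam / im lam`. An orbit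
is thus labelled by the logarithm of its crossing with the ray `θ = 0`, and a half-turn is an
increasing homeomorphism of the line of labels. Composing the half-turns in the two half-planes
gives the return map, which displaces every label by approximately `πℓ`. It therefore has no fixed
point and moves all labels in the direction of `sign ℓ`, and any two such homeomorphisms of the line
are conjugate. A conjugacy of return maps extends to the plane by preserving the angle: it sends
orbits to orbits in each half-plane, and the conjugacy relation is exactly what makes the two halves
agree on the switching line.
-/

open scoped NNReal

section Gronwall

variable {E : Type*} [NormedAddCommGroup E] [NormedSpace ℝ E] {u u' : ℝ → E} {K a b : ℝ}

theorem norm_le_mul_exp_of_norm_deriv_le_of_le (hab : a ≤ b)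
    (hu : ∀ t ∈ Icc a b, HasDerivAt u (u' t) t) (hK : ∀ t ∈ Icc a b, ‖u' t‖ ≤ K * ‖u t‖) :
    ‖u b‖ ≤ ‖u a‖ * Real.exp (K * (b - a)) := by
  have h := norm_le_gronwallBound_of_norm_deriv_right_le (ε := 0)
    (fun t ht => (hu t ht).continuousAt.continuousWithinAt)
    (fun t ht => (hu t (Ico_subset_Icc_self ht)).hasDerivWithinAt) le_rfl
    (fun t ht => by simpa only [add_zero] using hK t (Ico_subset_Icc_self ht))
    b (right_mem_Icc.2 hab)
  rwa [gronwallBound_ε0] at h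

theorem norm_le_mul_exp_of_norm_deriv_le (hu : ∀ t ∈ uIcc a b, HasDerivAt u (u' t) t)
    (hK : ∀ t ∈ uIcc a b, ‖u' t‖ ≤ K * ‖u t‖) :
    ‖u b‖ ≤ ‖u a‖ * Real.exp (K * |b - a|) := by
  rcases le_total a b with hab | hba
  · rw [uIcc_of_le hab] at hu hK
    rw [abs_of_nonneg (sub_nonneg.2 hab)]
    exact norm_le_mul_exp_of_norm_deriv_le_of_le hab hu hK
  · rw [uIcc_of_ge hba] at hu hK
    have hneg : ∀ t ∈ Icc (-a) (-b), -t ∈ Icc b a := fun t ht =>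
      ⟨le_neg_of_le_neg ht.2, neg_le_of_neg_le ht.1⟩
    have h := norm_le_mul_exp_of_norm_deriv_le_of_le (u := fun t => u (-t))
      (u' := fun t => -u' (-t)) (K := K) (neg_le_neg hba)
      (fun t ht => by
        simpa [Function.comp_def] using (hu _ (hneg t ht)).scomp t (hasDerivAt_neg t))
      (fun t ht => by simpa only [norm_neg] using hK _ (hneg t ht))
    rw [abs_of_nonpos (sub_nonpos.2 hba), neg_sub]
    simpa only [neg_neg, neg_sub_neg] using h

theorem eq_zero_of_norm_deriv_le {I : Set ℝ} (hI : I.OrdConnected)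
    (hu : ∀ t ∈ I, HasDerivAt u (u' t) t) (hK : ∀ t ∈ I, ‖u' t‖ ≤ K * ‖u t‖)
    (ha : a ∈ I) (hb : b ∈ I) (h0 : u a = 0) : u b = 0 := by
  have hsub : uIcc a b ⊆ I := hI.uIcc_subset ha hb
  have h := norm_le_mul_exp_of_norm_deriv_le (fun t ht => hu t (hsub ht))
    fun t ht => hK t (hsub ht)
  rwa [h0, norm_zero, zero_mul, norm_le_zero_iff] at h

end Gronwall

section Evolution

variable {E : Type*} [NormedAddCommGroup E] [NormedSpace ℝ E] {g : ℝ → E → E} {K : ℝ≥0}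
  {f₁ f₂ : ℝ → E}

theorem dist_le_of_hasDerivAt {a b : ℝ} (hLip : ∀ t, LipschitzWith K (g t))
    (h₁ : ∀ t ∈ uIcc a b, HasDerivAt f₁ (g t (f₁ t)) t)
    (h₂ : ∀ t ∈ uIcc a b, HasDerivAt f₂ (g t (f₂ t)) t) :
    dist (f₁ b) (f₂ b) ≤ dist (f₁ a) (f₂ a) * Real.exp (K * |b - a|) := by
  simp only [dist_eq_norm]
  exact norm_le_mul_exp_of_norm_deriv_le (u := fun t => f₁ t - f₂ t)
    (fun t ht => (h₁ t ht).sub (h₂ t ht)) fun t _ => (hLip t).norm_sub_le _ _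

theorem eq_of_hasDerivAt_of_eq {a : ℝ} (hLip : ∀ t, LipschitzWith K (g t))
    (h₁ : ∀ t, HasDerivAt f₁ (g t (f₁ t)) t) (h₂ : ∀ t, HasDerivAt f₂ (g t (f₂ t)) t)
    (hab : f₁ a = f₂ a) : f₁ = f₂ :=
  ODE_solution_unique_univ (s := fun _ => univ) (fun t => (hLip t).lipschitzOnWith)
    (fun t => ⟨h₁ t, mem_univ _⟩) (fun t => ⟨h₂ t, mem_univ _⟩) hab

theorem continuous_evolution {φ : ℝ → E → ℝ → E} (hLip : ∀ t, LipschitzWith K (g t))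
    (hφ0 : ∀ t₀ x₀, φ t₀ x₀ t₀ = x₀)
    (hφ : ∀ t₀ x₀ t, HasDerivAt (φ t₀ x₀) (g t (φ t₀ x₀ t)) t) :
    Continuous fun q : ℝ × E × ℝ => φ q.1 q.2.1 q.2.2 := by
  refine continuous_iff_continuousAt.2 fun ⟨a, x, b⟩ => ?_
  -- Every nearby trajectory is compared with the one through `(a, x)`.
  set f := φ a x with hf_def
  have hf : Continuous f := continuous_iff_continuousAt.2 fun t => (hφ a x t).continuousAt
  have hdist : ∀ q : ℝ × E × ℝ, dist (φ q.1 q.2.1 q.2.2) (f b) ≤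
      dist q.2.1 (f q.1) * Real.exp (K * |q.2.2 - q.1|) + dist (f q.2.2) (f b) := by
    rintro ⟨t₀, x₀, t⟩
    have h := dist_le_of_hasDerivAt (a := t₀) (b := t) hLip (fun s _ => hφ t₀ x₀ s)
      fun s _ => hφ a x s
    rw [hφ0] at h
    exact (dist_triangle _ (f t) _).trans (add_le_add_left h _)
  have hlim : Tendsto (fun q : ℝ × E × ℝ =>
      dist q.2.1 (f q.1) * Real.exp (K * |q.2.2 - q.1|) + dist (f q.2.2) (f b))
      (nhds (a, x, b)) (nhds 0) := by
    have hc : Continuous fun q : ℝ × E × ℝ =>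
        dist q.2.1 (f q.1) * Real.exp (K * |q.2.2 - q.1|) + dist (f q.2.2) (f b) := by fun_prop
    simpa [hf_def, hφ0] using hc.tendsto (a, x, b)
  exact tendsto_iff_dist_tendsto_zero.2 (squeeze_zero (fun _ => dist_nonneg) hdist hlim)

variable [CompleteSpace E]

theorem exists_hasDerivAt_Ioo_of_lipschitz_of_bounded {B : ℝ≥0}
    (hg : Continuous (Function.uncurry g)) (hLip : ∀ t, LipschitzWith K (g t))
    (hB : ∀ t x, ‖g t x‖ ≤ B) (t₀ : ℝ) (x₀ : E) (T : ℝ≥0) :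
    ∃ f : ℝ → E, f t₀ = x₀ ∧ ∀ t ∈ Ioo (t₀ - T) (t₀ + T), HasDerivAt f (g t (f t)) t := by
  have ht₀ : t₀ ∈ Icc (t₀ - T) (t₀ + T) := by simp
  have hpl : IsPicardLindelof g (⟨t₀, ht₀⟩ : Icc (t₀ - T) (t₀ + T)) x₀ (B * T) 0 B K :=
    { lipschitzOnWith := fun t _ => (hLip t).lipschitzOnWith
      continuousOn := fun x _ => (hg.comp (.prodMk_left x)).continuousOn
      norm_le := fun t _ x _ => hB t x
      mul_max_le := by simp }
  obtain ⟨f, h0, h⟩ := hpl.exists_eq_forall_mem_Icc_hasDerivWithinAt₀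
  exact ⟨f, h0, fun t ht => (h t (Ioo_subset_Icc_self ht)).hasDerivAt (Icc_mem_nhds ht.1 ht.2)⟩

theorem exists_hasDerivAt_of_lipschitz_of_bounded {B : ℝ≥0}
    (hg : Continuous (Function.uncurry g)) (hLip : ∀ t, LipschitzWith K (g t))
    (hB : ∀ t x, ‖g t x‖ ≤ B) (t₀ : ℝ) (x₀ : E) :
    ∃ f : ℝ → E, f t₀ = x₀ ∧ ∀ t, HasDerivAt f (g t (f t)) t := by
  choose f hf0 hf using fun n : ℕ =>
    exists_hasDerivAt_Ioo_of_lipschitz_of_bounded hg hLip hB t₀ x₀ n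
  simp only [NNReal.coe_natCast, ← Real.ball_eq_Ioo, Metric.mem_ball] at hf
  have agree : ∀ {m n : ℕ} {t : ℝ}, dist t t₀ < m → dist t t₀ < n → f m t = f n t := by
    intro m n t hm hn
    have hsub : ∀ s ∈ uIcc t₀ t, dist s t₀ ≤ dist t t₀ := fun s hs => by
      rw [dist_comm s, dist_comm t]; exact Real.dist_left_le_of_mem_uIcc hs
    have h := dist_le_of_hasDerivAt hLip (fun s hs => hf m s ((hsub s hs).trans_lt hm))
      fun s hs => hf n s ((hsub s hs).trans_lt hn)
    rw [hf0, hf0, dist_self, zero_mul] at h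
    exact dist_le_zero.1 h
  have hceil : ∀ t, dist t t₀ < (⌊dist t t₀⌋₊ + 1 : ℕ) := fun t => by
    exact_mod_cast Nat.lt_floor_add_one (dist t t₀)
  refine ⟨fun t => f (⌊dist t t₀⌋₊ + 1) t, hf0 _, fun t => ?_⟩
  refine (hf _ t (hceil t)).congr_of_eventuallyEq ?_
  filter_upwards [Metric.isOpen_ball.mem_nhds (hceil t)] with s hs
  exact agree (hceil s) hs

end Evolution

section ScalarFlow

/-- `S θ σ` is the value at time `θ` of the solution of the scalar equation `s' = g θ s` starting
from `σ` at time `0`. The flow is recorded as a family of order automorphisms of the line, jointly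
continuous together with their inverses. -/
structure IsScalarFlow (g : ℝ → ℝ → ℝ) (S : ℝ → ℝ ≃o ℝ) : Prop where
  zero_apply : ∀ σ, S 0 σ = σ
  hasDerivAt : ∀ σ θ, HasDerivAt (fun t => S t σ) (g θ (S θ σ)) θ
  continuous : Continuous fun q : ℝ × ℝ => S q.1 q.2
  continuous_symm : Continuous fun q : ℝ × ℝ => (S q.1).symm q.2

variable {g : ℝ → ℝ → ℝ} {K : ℝ≥0}

theorem lt_of_hasDerivAt_of_lt {f₁ f₂ : ℝ → ℝ} {a : ℝ} (hLip : ∀ t, LipschitzWith K (g t))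
    (h₁ : ∀ t, HasDerivAt f₁ (g t (f₁ t)) t) (h₂ : ∀ t, HasDerivAt f₂ (g t (f₂ t)) t)
    (ha : f₁ a < f₂ a) (b : ℝ) : f₁ b < f₂ b := by
  by_contra! hb
  have hc : Continuous fun t => f₂ t - f₁ t :=
    continuous_iff_continuousAt.2 fun t => ((h₂ t).sub (h₁ t)).continuousAt
  obtain ⟨t, -, ht⟩ : (0 : ℝ) ∈ (fun t => f₂ t - f₁ t) '' uIcc b a :=
    intermediate_value_uIcc hc.continuousOn
      (mem_uIcc_of_le (sub_nonpos.2 hb) (sub_nonneg.2 ha.le))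
  have := eq_of_hasDerivAt_of_eq hLip h₁ h₂ (sub_eq_zero.1 ht).symm
  exact ha.ne (congrFun this a)

theorem exists_isScalarFlow {B : ℝ≥0} (hg : Continuous (Function.uncurry g))
    (hLip : ∀ t, LipschitzWith K (g t)) (hB : ∀ t x, ‖g t x‖ ≤ B) :
    ∃ S : ℝ → ℝ ≃o ℝ, IsScalarFlow g S := by
  choose φ hφ0 hφ using exists_hasDerivAt_of_lipschitz_of_bounded hg hLip hB
  have hcont := continuous_evolution hLip hφ0 hφ
  have hcomp : ∀ r t s x, φ t (φ s x t) r = φ s x r := fun r t s x =>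
    congrFun (eq_of_hasDerivAt_of_eq hLip (hφ _ _) (hφ _ _) (hφ0 t (φ s x t))) r
  have hmono : ∀ θ, StrictMono fun σ => φ 0 σ θ := fun θ σ σ' h =>
    lt_of_hasDerivAt_of_lt (a := 0) hLip (hφ 0 σ) (hφ 0 σ') (by rwa [hφ0, hφ0]) θ
  refine ⟨fun θ => (hmono θ).orderIsoOfRightInverse _ (fun s => φ θ s 0)
    fun s => (hcomp θ 0 θ s).trans (hφ0 θ s), fun σ => hφ0 0 σ, fun σ θ => hφ 0 σ θ, ?_, ?_⟩
  · exact hcont.comp (continuous_const.prodMk continuous_swap)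
  · exact hcont.comp (continuous_fst.prodMk (continuous_snd.prodMk continuous_const))

theorem IsScalarFlow.abs_sub_sub_le {S : ℝ → ℝ ≃o ℝ} (hS : IsScalarFlow g S) {ρ η : ℝ}
    (hg : ∀ θ s, |g θ s - ρ| ≤ η) (θ σ : ℝ) : |S θ σ - σ - ρ * θ| ≤ η * |θ| := by
  have hderiv : ∀ t, HasDerivAt (fun t => S t σ - ρ * t) (g t (S t σ) - ρ) t := fun t => by
    simpa using (hS.hasDerivAt σ t).fun_sub ((hasDerivAt_id t).const_mul ρ)
  have h := Convex.norm_image_sub_le_of_norm_hasDerivWithin_le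
    (fun t _ => (hderiv t).hasDerivWithinAt) (fun t _ => hg t (S t σ)) convex_univ
    (mem_univ 0) (mem_univ θ)
  simp only [hS.zero_apply, Real.norm_eq_abs, sub_zero, mul_zero] at h
  rwa [sub_right_comm]

end ScalarFlow

section Conjugacy

theorem exists_lt_iterate {α : Type*} [ConditionallyCompleteLinearOrder α] [TopologicalSpace α]
    [OrderTopology α] {f : α → α} (hf : Continuous f) (hlt : ∀ s, s < f s) (x y : α) :
    ∃ n : ℕ, y < f^[n] x := by
  by_contra! hbdd
  have hmono : Monotone fun n : ℕ => f^[n] x := monotone_nat_of_le_succ fun n => by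
    rw [Function.iterate_succ_apply']
    exact (hlt _).le
  have hlim := tendsto_atTop_ciSup hmono ⟨y, forall_mem_range.2 hbdd⟩
  exact (hlt _).ne' (isFixedPt_of_tendsto_iterate hlim hf.continuousAt)

variable {P Q : ℝ ≃o ℝ}

theorem orderIso_zpow_add_one_apply (P : ℝ ≃o ℝ) (n : ℤ) (x : ℝ) :
    (P ^ (n + 1)) x = (P ^ n) (P x) := by
  rw [zpow_add_one, RelIso.mul_apply]

theorem strictMono_zpow_apply (hP : ∀ s, s < P s) (x : ℝ) : StrictMono fun n : ℤ => (P ^ n) x :=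
  strictMono_int_of_lt_succ fun n => by
    rw [orderIso_zpow_add_one_apply]
    exact (P ^ n).strictMono (hP x)

theorem exists_zpow_apply_le_lt (hP : ∀ s, s < P s) (x s : ℝ) :
    ∃ n : ℤ, (P ^ n) x ≤ s ∧ s < (P ^ (n + 1)) x := by
  have hmono := strictMono_zpow_apply hP x
  have hiter : ∀ (n : ℕ) (y : ℝ), (P ^ n) y = P^[n] y := fun n y => by
    induction n generalizing y with
    | zero => rfl
    | succ n ih => rw [pow_succ, RelIso.mul_apply, ih, Function.iterate_succ_apply]
  obtain ⟨N, hN⟩ := exists_lt_iterate P.continuous hP x s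
  obtain ⟨M, hM⟩ := exists_lt_iterate P.continuous hP s x
  have hlow : (P ^ (-M : ℤ)) x ≤ s := by
    rw [← hiter] at hM
    rw [zpow_neg, zpow_natCast, ← (P ^ M).le_iff_le, RelIso.apply_inv_self]
    exact hM.le
  obtain ⟨n, hn, hmax⟩ := Int.exists_greatest_of_bdd (P := fun n => (P ^ n) x ≤ s)
    ⟨N, fun z hz => by
      rw [← hiter, ← zpow_natCast] at hN
      exact (hmono.lt_iff_lt.1 (hz.trans_lt hN)).le⟩ ⟨-M, hlow⟩
  exact ⟨n, hn, lt_of_not_ge fun h => by linarith [hmax _ h]⟩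

theorem exists_conj_translation (hP : ∀ s, s < P s) :
    ∃ k : ℝ ≃o ℝ, ∀ t, k (t + 1) = P (k t) := by
  have hP0 : 0 < P 0 := hP 0
  -- `[0, P 0)` is a fundamental domain of `P`, parametrized affinely by `[0, 1)`.
  let k : ℝ → ℝ := fun t => (P ^ ⌊t⌋) (P 0 * Int.fract t)
  have hmono : StrictMono k := by
    intro t u htu
    rcases (Int.floor_mono htu.le).lt_or_eq with hlt | heq
    · calc k t < (P ^ ⌊t⌋) (P 0) :=
            (P ^ ⌊t⌋).strictMono (mul_lt_of_lt_one_right hP0 (Int.fract_lt_one t))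
        _ = (P ^ (⌊t⌋ + 1)) 0 := (orderIso_zpow_add_one_apply P _ _).symm
        _ ≤ (P ^ ⌊u⌋) 0 := (strictMono_zpow_apply hP 0).monotone hlt
        _ ≤ k u := (P ^ ⌊u⌋).monotone (mul_nonneg hP0.le (Int.fract_nonneg u))
    · have hfract : Int.fract t < Int.fract u := by
        simpa only [Int.fract, heq] using sub_lt_sub_right htu _
      simpa only [k, heq] using (P ^ ⌊u⌋).strictMono (mul_lt_mul_of_pos_left hfract hP0)
  have hsurj : Function.Surjective k := by
    intro s
    obtain ⟨n, hle, hlt⟩ := exists_zpow_apply_le_lt hP 0 s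
    obtain ⟨x, rfl⟩ := (P ^ n).surjective s
    rw [orderIso_zpow_add_one_apply, (P ^ n).lt_iff_lt] at hlt
    have hx : x / P 0 ∈ Ico (0 : ℝ) 1 :=
      ⟨div_nonneg ((P ^ n).le_iff_le.1 hle) hP0.le, (div_lt_one hP0).2 hlt⟩
    refine ⟨n + x / P 0, ?_⟩
    simp only [k, Int.floor_intCast_add, Int.fract_intCast_add, Int.floor_eq_zero_iff.2 hx,
      Int.fract_eq_self.2 hx, add_zero, mul_div_cancel₀ x hP0.ne']
  refine ⟨hmono.orderIsoOfSurjective k hsurj, fun t => ?_⟩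
  simp only [StrictMono.coe_orderIsoOfSurjective, k, Int.floor_add_one, Int.fract_add_one,
    zpow_add, zpow_one, add_comm ⌊t⌋ 1, RelIso.mul_apply]

theorem exists_conj_of_forall_lt (hP : ∀ s, s < P s) (hQ : ∀ s, s < Q s) :
    ∃ h : ℝ ≃o ℝ, ∀ s, h (P s) = Q (h s) := by
  obtain ⟨k, hk⟩ := exists_conj_translation hP
  obtain ⟨l, hl⟩ := exists_conj_translation hQ
  refine ⟨k.symm.trans l, fun s => ?_⟩
  have hs := hk (k.symm s)
  rw [k.apply_symm_apply] at hs
  rw [OrderIso.trans_apply, OrderIso.trans_apply, ← hs, k.symm_apply_apply, hl]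

theorem exists_conj_of_forall_gt (hP : ∀ s, P s < s) (hQ : ∀ s, Q s < s) :
    ∃ h : ℝ ≃o ℝ, ∀ s, h (P s) = Q (h s) := by
  obtain ⟨h, hh⟩ := exists_conj_of_forall_lt (P := P.symm) (Q := Q.symm)
    (fun s => P.lt_symm_apply.2 (hP s)) fun s => Q.lt_symm_apply.2 (hQ s)
  refine ⟨h, fun s => ?_⟩
  rw [← Q.symm_apply_eq, ← hh, P.symm_apply_apply]

theorem exists_conj_of_mul_sub_pos {a b : ℝ} (hab : 0 < a * b)
    (hP : ∀ σ, 0 < a * (P σ - σ)) (hQ : ∀ σ, 0 < b * (Q σ - σ)) :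
    ∃ h : ℝ ≃o ℝ, ∀ σ, h (P σ) = Q (h σ) := by
  rcases pos_and_pos_or_neg_and_neg_of_mul_pos hab with ⟨ha, hb⟩ | ⟨ha, hb⟩
  · exact exists_conj_of_forall_lt (fun σ => sub_pos.1 (pos_of_mul_pos_right (hP σ) ha.le))
      fun σ => sub_pos.1 (pos_of_mul_pos_right (hQ σ) hb.le)
  · exact exists_conj_of_forall_gt (fun σ => sub_neg.1 (neg_of_mul_pos_right (hP σ) ha.le))
      fun σ => sub_neg.1 (neg_of_mul_pos_right (hQ σ) hb.le)

end Conjugacy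

section TimeChange

theorem exists_leftInverse_hasDerivAt {T f : ℝ → ℝ} (hpos : ∀ x, 0 < f x)
    (hT : ∀ x, HasStrictDerivAt T (f x)⁻¹ x) :
    ∃ Ti : ℝ → ℝ, Function.LeftInverse Ti T ∧ ∀ x, HasDerivAt Ti (f x) (T x) := by
  have hmono : StrictMono T :=
    strictMono_of_hasDerivAt_pos (fun x => (hT x).hasDerivAt) fun x => inv_pos.2 (hpos x)
  have hcont : Continuous T := continuous_iff_continuousAt.2 fun x => (hT x).hasDerivAt.continuousAt
  have hemb : Topology.IsOpenEmbedding T := .of_continuous_injective_isOpenMap hcont hmono.injective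
    (isOpenMap_of_hasStrictDerivAt hT fun x => inv_ne_zero (hpos x).ne')
  let e := hemb.toOpenPartialHomeomorph T
  have hsymm : Function.LeftInverse e.symm T := fun x => e.left_inv (mem_univ x)
  refine ⟨e.symm, hsymm, fun x => ?_⟩
  have h := e.hasDerivAt_symm (a := T x) (e.map_source (mem_univ x)) (inv_ne_zero (hpos x).ne')
    (by rw [hsymm]; exact (hT x).hasDerivAt)
  rwa [inv_inv] at h

theorem exists_timeChange {f : ℝ → ℝ} (hf : Continuous f) (hpos : ∀ x, 0 < f x) :
    ∃ T Ti : ℝ → ℝ, StrictMono T ∧ Continuous T ∧ Function.LeftInverse Ti T ∧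
      ∀ x, HasDerivAt Ti (f x) (T x) := by
  have hinv : Continuous fun x => (f x)⁻¹ := hf.inv₀ fun x => (hpos x).ne'
  have hT := fun x => hinv.integral_hasStrictDerivAt 0 x
  obtain ⟨Ti, hleft, hTi⟩ := exists_leftInverse_hasDerivAt hpos hT
  exact ⟨_, Ti, strictMono_of_hasDerivAt_pos (fun x => (hT x).hasDerivAt)
    fun x => inv_pos.2 (hpos x),
    continuous_iff_continuousAt.2 fun x => (hT x).hasDerivAt.continuousAt,
    hleft, hTi⟩

end TimeChange

section UpperLog

open Complex

/-- The branch of the logarithm with imaginary part in `[0, π]` on the closed upper half-plane,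
holomorphic near every nonzero point of it: the principal branch is conjugated by the rotation by
`-π / 2`, which moves its cut to the negative imaginary axis. -/
def upperLog (z : ℂ) : ℂ := log (-I * z) + (Real.pi / 2 : ℝ) * I

theorem exp_half_pi_mul_I : exp ((Real.pi / 2 : ℝ) * I) = I := by
  push_cast
  exact exp_pi_div_two_mul_I

theorem exp_upperLog {z : ℂ} (hz : z ≠ 0) : exp (upperLog z) = z := by
  rw [upperLog, exp_add, exp_half_pi_mul_I, exp_log (by simp [hz])]
  linear_combination (-z) * I_mul_I

theorem upperLog_exp {w : ℂ} (hw : w.im ∈ Icc 0 Real.pi) : upperLog (exp w) = w := by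
  have hrot : -I * exp w = exp (w - (Real.pi / 2 : ℝ) * I) := by
    rw [exp_sub, exp_half_pi_mul_I, div_I]; ring
  have him : (w - (Real.pi / 2 : ℝ) * I).im = w.im - Real.pi / 2 := by simp
  rw [upperLog, hrot, log_exp, sub_add_cancel]
  · rw [him]; linarith [Real.pi_pos, hw.1]
  · rw [him]; linarith [Real.pi_pos, hw.2]

theorem hasDerivAt_upperLog {z : ℂ} (hz : z ≠ 0) (him : 0 ≤ z.im) :
    HasDerivAt upperLog z⁻¹ z := by
  have hslit : -I * z ∈ slitPlane := by
    rw [mem_slitPlane_iff]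
    rcases him.lt_or_eq with hpos | hzero
    · exact Or.inl (by simpa using hpos)
    · exact Or.inr fun hre => hz (Complex.ext (by simpa using hre) hzero.symm)
  have h := ((hasDerivAt_const_mul (-I)).clog hslit).add_const ((Real.pi / 2 : ℝ) * I)
  rwa [div_mul_cancel_left₀ (neg_ne_zero.2 I_ne_zero)] at h

theorem upperLog_im_mem_Icc {z : ℂ} (him : 0 ≤ z.im) : (upperLog z).im ∈ Icc 0 Real.pi := by
  have harg : |(-I * z).arg| ≤ Real.pi / 2 := by
    rw [abs_arg_le_pi_div_two_iff]; simpa using him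
  have heq : (upperLog z).im = (-I * z).arg + Real.pi / 2 := by simp [upperLog, log_im]
  rw [abs_le] at harg
  rw [heq]
  exact ⟨by linarith, by linarith⟩

end UpperLog

section LogField

open Complex

/-- The vector field `f` of the punctured plane in the logarithmic coordinate: `z = exp w` solves
`z' = f z` if and only if `w' = logField f w`. -/
def logField (f : ℂ → ℂ) (w : ℂ) : ℂ := f (exp w) / exp w

theorem norm_exp_sub_one_le_norm {v : ℂ} (hv : v.re ≤ 0) : ‖exp v - 1‖ ≤ ‖v‖ := by
  have h := Convex.norm_image_sub_le_of_norm_hasDerivWithin_le (C := 1)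
    (fun x _ => (hasDerivAt_exp x).hasDerivWithinAt)
    (fun x (hx : x.re ≤ 0) => by rw [norm_exp]; exact Real.exp_le_one_iff.2 hx)
    (convex_halfSpace_re_le 0) (show (0 : ℂ).re ≤ 0 from le_rfl) hv
  simpa using h

theorem norm_div_self_sub_div_self_le {𝕜 : Type*} [NormedField 𝕜] {f : 𝕜 → 𝕜} {s : Set 𝕜}
    {K : ℝ≥0} (hf : LipschitzOnWith K f s) (hs : 0 ∈ s) (h0 : f 0 = 0) {z z' : 𝕜}
    (hz : z ∈ s) (hz' : z' ∈ s) (hne : z ≠ 0) (hne' : z' ≠ 0) :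
    ‖f z / z - f z' / z'‖ ≤ 2 * K * (‖z - z'‖ / ‖z'‖) := by
  have hquot : ‖f z / z‖ ≤ K := by
    rw [norm_div, div_le_iff₀ (norm_pos_iff.2 hne)]
    simpa [h0] using hf.norm_sub_le hz hs
  have hsplit : f z / z - f z' / z' = (f z - f z' - f z / z * (z - z')) / z' := by
    field_simp; ring
  calc ‖f z / z - f z' / z'‖ ≤ (‖f z - f z'‖ + ‖f z / z‖ * ‖z - z'‖) / ‖z'‖ := by
        rw [hsplit, norm_div, ← norm_mul]
        gcongr
        exact norm_sub_le _ _
    _ ≤ (K * ‖z - z'‖ + K * ‖z - z'‖) / ‖z'‖ := by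
        gcongr
        exact hf.norm_sub_le hz hz'
    _ = 2 * K * (‖z - z'‖ / ‖z'‖) := by ring

theorem lipschitzOnWith_logField {f : ℂ → ℂ} {s : Set ℂ} {K : ℝ≥0} (hf : LipschitzOnWith K f s)
    (hs : 0 ∈ s) (h0 : f 0 = 0) : LipschitzOnWith (2 * K) (logField f) (exp ⁻¹' s) := by
  have hle : ∀ w ∈ exp ⁻¹' s, ∀ w' ∈ exp ⁻¹' s, w.re ≤ w'.re →
      ‖logField f w - logField f w'‖ ≤ 2 * K * ‖w - w'‖ := by
    intro w hw w' hw' hre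
    refine (norm_div_self_sub_div_self_le hf hs h0 hw hw' (exp_ne_zero w)
      (exp_ne_zero w')).trans ?_
    gcongr
    rw [← norm_div, sub_div, div_self (exp_ne_zero w'), ← exp_sub]
    exact norm_exp_sub_one_le_norm (by simpa using hre)
  refine LipschitzOnWith.of_dist_le_mul fun w hw w' hw' => ?_
  rw [dist_eq_norm, dist_eq_norm]
  push_cast
  rcases le_total w.re w'.re with h | h
  · exact hle w hw w' hw' h
  · rw [norm_sub_rev, norm_sub_rev w]
    exact hle w' hw' w hw h

/-- The retraction of the plane onto the half-plane `re w ≤ a` along the horizontal lines. -/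
def clampRe (a : ℝ) (w : ℂ) : ℂ := ⟨min w.re a, w.im⟩

theorem lipschitzWith_clampRe (a : ℝ) : LipschitzWith 1 (clampRe a) := by
  refine LipschitzWith.of_dist_le_mul fun w w' => ?_
  rw [dist_eq_norm, dist_eq_norm, NNReal.coe_one, one_mul,
    ← sq_le_sq₀ (norm_nonneg _) (norm_nonneg _), Complex.sq_norm, Complex.sq_norm,
    normSq_apply, normSq_apply]
  simp only [← sq]
  have hmin : |min w.re a - min w'.re a| ≤ |w.re - w'.re| := by
    simpa using abs_min_sub_min_le_max w.re a w'.re a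
  exact add_le_add_left (sq_le_sq.2 hmin) _

theorem norm_logField_sub_le {f : ℂ → ℂ} {lam w : ℂ} {ε : ℝ}
    (h : ‖f (exp w) - lam * exp w‖ ≤ ε * ‖exp w‖) : ‖logField f w - lam‖ ≤ ε := by
  rwa [logField, div_sub' (exp_ne_zero w), norm_div, div_le_iff₀ (norm_pos_iff.2 (exp_ne_zero w)),
    mul_comm (exp w)]

theorem exists_lipschitzWith_eq_logField {f : ℂ → ℂ} {s : Set ℂ} {K : ℝ≥0} {lam : ℂ} {ε : ℝ}
    (hs : s ∈ nhds 0) (hf : LipschitzOnWith K f s) (h0 : f 0 = 0)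
    (hlam : (fun z => f z - lam * z) =o[nhds 0] fun z => z) (hε : 0 < ε) :
    ∃ F : ℂ → ℂ, LipschitzWith (2 * K) F ∧ (∀ w, ‖F w - lam‖ ≤ ε) ∧
      ∀ᶠ z in nhds 0, ∀ w, exp w = z → F w = logField f w := by
  obtain ⟨r, hr, hsub⟩ := Metric.nhds_basis_closedBall.mem_iff.1 (inter_mem hs (hlam.def hε))
  have hball : ∀ w, w.re ≤ Real.log r ↔ exp w ∈ Metric.closedBall 0 r := fun w => by
    rw [mem_closedBall_zero_iff, norm_exp, Real.le_log_iff_exp_le hr]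
  have hclamp : MapsTo (clampRe (Real.log r)) univ (exp ⁻¹' Metric.closedBall 0 r) :=
    fun w _ => (hball _).1 (min_le_right _ _)
  refine ⟨logField f ∘ clampRe (Real.log r), ?_, fun w => ?_, ?_⟩
  · have hLip := lipschitzOnWith_logField (hf.mono fun z hz => (hsub hz).1)
      (Metric.mem_closedBall_self hr.le) h0
    simpa using hLip.comp (lipschitzWith_clampRe _).lipschitzOnWith hclamp
  · exact norm_logField_sub_le (hsub (hclamp (mem_univ w))).2
  · filter_upwards [Metric.closedBall_mem_nhds 0 hr] with z hz w hw
    have hre : min w.re (Real.log r) = w.re := min_eq_left ((hball w).2 (hw ▸ hz))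
    rw [Function.comp_apply, clampRe, hre]

end LogField

section Rotating

open Complex

/-- A vector field on the plane of `w = s + i θ` along which the angle `θ` increases at a rate
bounded away from zero, with the regularity that makes its orbits graphs over the `θ`-axis. -/
structure IsRotating (F : ℂ → ℂ) : Prop where
  lipschitz : ∃ K : ℝ≥0, LipschitzWith K F
  bounded : ∃ M, ∀ w, ‖F w‖ ≤ M
  exists_le_im : ∃ m > 0, ∀ w, m ≤ (F w).im

/-- The slope `ds / dθ` of the orbits of `F` at the point `s + i θ`. -/
def orbitSlope (F : ℂ → ℂ) (θ s : ℝ) : ℝ := (F (s + θ * I)).re / (F (s + θ * I)).im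

theorem abs_re_div_im_sub_le {v v' : ℂ} {m M : ℝ} (hm : 0 < m) (hv : m ≤ v.im) (hv' : m ≤ v'.im)
    (hM : ‖v'‖ ≤ M) : |v.re / v.im - v'.re / v'.im| ≤ (1 + M / m) / m * ‖v - v'‖ := by
  have hpos : 0 < v.im := hm.trans_le hv
  have hpos' : 0 < v'.im := hm.trans_le hv'
  have hsplit : v.re / v.im - v'.re / v'.im =
      ((v - v').re - v'.re / v'.im * (v - v').im) / v.im := by
    simp only [sub_re, sub_im]; field_simp; ring
  have hslope : |v'.re / v'.im| ≤ M / m := by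
    rw [abs_div, abs_of_pos hpos']
    exact div_le_div₀ ((norm_nonneg _).trans hM) ((abs_re_le_norm _).trans hM) hm hv'
  have hnum : |(v - v').re - v'.re / v'.im * (v - v').im| ≤ (1 + M / m) * ‖v - v'‖ :=
    calc _ ≤ |(v - v').re| + |v'.re / v'.im| * |(v - v').im| := by
          rw [← abs_mul]; exact abs_sub _ _
      _ ≤ ‖v - v'‖ + M / m * ‖v - v'‖ := by
          exact add_le_add (abs_re_le_norm _) (mul_le_mul hslope (abs_im_le_norm _)
            (abs_nonneg _) ((abs_nonneg _).trans hslope))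
      _ = _ := by ring
  rw [hsplit, abs_div, abs_of_pos hpos, div_mul_eq_mul_div (1 + M / m)]
  exact div_le_div₀ ((abs_nonneg _).trans hnum) hnum hm hv

namespace IsRotating

variable {F : ℂ → ℂ} (hF : IsRotating F)
include hF

theorem im_pos (w : ℂ) : 0 < (F w).im := by
  obtain ⟨m, hm, him⟩ := hF.exists_le_im
  exact hm.trans_le (him w)

theorem continuous : Continuous F := by
  obtain ⟨K, hK⟩ := hF.lipschitz
  exact hK.continuous

theorem orbitSlope_mul_im (w : ℂ) : orbitSlope F w.im w.re * (F w).im = (F w).re := by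
  rw [orbitSlope, re_add_im, div_mul_cancel₀ _ (hF.im_pos w).ne']

theorem continuous_orbitSlope : Continuous (Function.uncurry (orbitSlope F)) := by
  have hc : Continuous fun q : ℝ × ℝ => F (q.2 + q.1 * I) := hF.continuous.comp (by fun_prop)
  exact (continuous_re.comp hc).div (continuous_im.comp hc) fun q => (hF.im_pos _).ne'

theorem exists_norm_orbitSlope_le : ∃ B : ℝ≥0, ∀ θ s, ‖orbitSlope F θ s‖ ≤ B := by
  obtain ⟨M, hM⟩ := hF.bounded
  obtain ⟨m, hm, him⟩ := hF.exists_le_im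
  have hM0 : 0 ≤ M := (norm_nonneg _).trans (hM 0)
  refine ⟨⟨M / m, by positivity⟩, fun θ s => ?_⟩
  rw [orbitSlope, norm_div, Real.norm_eq_abs, Real.norm_eq_abs, abs_of_pos (hF.im_pos _)]
  exact div_le_div₀ hM0 ((abs_re_le_norm _).trans (hM _)) hm (him _)

theorem exists_lipschitzWith_orbitSlope : ∃ K : ℝ≥0, ∀ θ, LipschitzWith K (orbitSlope F θ) := by
  obtain ⟨K, hK⟩ := hF.lipschitz
  obtain ⟨M, hM⟩ := hF.bounded
  obtain ⟨m, hm, him⟩ := hF.exists_le_im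
  have hM0 : 0 ≤ M := (norm_nonneg _).trans (hM 0)
  refine ⟨((1 + M / m) / m * K).toNNReal, fun θ => LipschitzWith.of_dist_le' fun s s' => ?_⟩
  rw [Real.dist_eq, Real.dist_eq, mul_assoc]
  refine (abs_re_div_im_sub_le hm (him _) (him _) (hM _)).trans
    (mul_le_mul_of_nonneg_left ((hK.norm_sub_le _ _).trans_eq ?_) (by positivity))
  rw [add_sub_add_right_eq_sub, ← ofReal_sub, norm_real, Real.norm_eq_abs]

theorem exists_isScalarFlow : ∃ S : ℝ → ℝ ≃o ℝ, IsScalarFlow (orbitSlope F) S := by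
  obtain ⟨K, hK⟩ := hF.exists_lipschitzWith_orbitSlope
  obtain ⟨B, hB⟩ := hF.exists_norm_orbitSlope_le
  exact _root_.exists_isScalarFlow hF.continuous_orbitSlope hK hB

variable {S : ℝ → ℝ ≃o ℝ} (hS : IsScalarFlow (orbitSlope F) S) {w : ℝ → ℂ} {I : Set ℝ}
  (hI : I.OrdConnected) (hw : ∀ t ∈ I, HasDerivAt w (F (w t)) t)
include hI hw

theorem strictMonoOn_im : StrictMonoOn (fun t => (w t).im) I := by
  have hderiv : ∀ t ∈ I, HasDerivAt (fun t => (w t).im) (F (w t)).im t := fun t ht =>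
    imCLM.hasFDerivAt.comp_hasDerivAt t (hw t ht)
  exact strictMonoOn_of_hasDerivWithinAt_pos hI.convex
    (fun t ht => (hderiv t ht).continuousAt.continuousWithinAt)
    (fun t ht => (hderiv t (interior_subset ht)).hasDerivWithinAt) fun t _ => hF.im_pos (w t)

include hS

theorem re_eq_flow_im {σ t₀ t : ℝ} (ht₀ : t₀ ∈ I) (ht : t ∈ I)
    (h₀ : (w t₀).re = S (w t₀).im σ) : (w t).re = S (w t).im σ := by
  obtain ⟨K, hK⟩ := hF.exists_lipschitzWith_orbitSlope
  obtain ⟨M, hM⟩ := hF.bounded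
  have hre : ∀ t ∈ I, HasDerivAt (fun t => (w t).re) (F (w t)).re t := fun t ht =>
    reCLM.hasFDerivAt.comp_hasDerivAt t (hw t ht)
  have him : ∀ t ∈ I, HasDerivAt (fun t => (w t).im) (F (w t)).im t := fun t ht =>
    imCLM.hasFDerivAt.comp_hasDerivAt t (hw t ht)
  refine sub_eq_zero.1 (eq_zero_of_norm_deriv_le (u := fun t => (w t).re - S (w t).im σ)
    (K := K * M) hI (fun t ht => (hre t ht).sub ((hS.hasDerivAt σ _).comp t (him t ht)))
    (fun t _ => ?_) ht₀ ht (sub_eq_zero.2 h₀))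
  rw [← hF.orbitSlope_mul_im (w t), ← sub_mul, norm_mul, mul_right_comm]
  exact mul_le_mul ((hK _).norm_sub_le _ _) ((abs_im_le_norm _).trans (hM _)) (norm_nonneg _)
    (by positivity)

end IsRotating

end Rotating

section PolarForm

open Complex

/-- The image of the closed upper half-plane under the linear chart `L`. -/
def halfPlane (L : ℂ ≃L[ℝ] ℝ × ℝ) : Set (ℝ × ℝ) := {p | 0 ≤ (L.symm p).im}

variable {L : ℂ ≃L[ℝ] ℝ × ℝ} {p : ℝ × ℝ}

/-- The angle in `[0, π]` of a point of `halfPlane L`, measured in the chart `L`. -/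
def chartAngle (L : ℂ ≃L[ℝ] ℝ × ℝ) (p : ℝ × ℝ) : ℝ := (upperLog (L.symm p)).im

theorem chartAngle_mem_Icc (hp : p ∈ halfPlane L) : chartAngle L p ∈ Icc 0 Real.pi :=
  upperLog_im_mem_Icc hp

theorem continuousAt_upperLog_symm (hp : p ∈ halfPlane L) (h0 : p ≠ 0) :
    ContinuousAt (fun p => upperLog (L.symm p)) p :=
  (hasDerivAt_upperLog (by simpa using h0) hp).continuousAt.comp L.symm.continuous.continuousAt

theorem continuousAt_chartAngle (hp : p ∈ halfPlane L) (h0 : p ≠ 0) :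
    ContinuousAt (chartAngle L) p :=
  continuous_im.continuousAt.comp (continuousAt_upperLog_symm hp h0)

/-- A polar form of `X` at the origin, in the linear chart `L`: on the neighbourhood `source`,
`X` is conjugate under `w ↦ L (exp w)` to the rotating field `field`, whose orbits are the graphs
of the solutions `θ ↦ flow θ σ` of its slope equation. -/
structure PolarForm (X : ℝ × ℝ → ℝ × ℝ) (L : ℂ ≃L[ℝ] ℝ × ℝ) where
  source : Set (ℝ × ℝ)
  field : ℂ → ℂ
  flow : ℝ → ℝ ≃o ℝ
  source_mem : source ∈ nhds 0
  isRotating : IsRotating field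
  isScalarFlow : IsScalarFlow (orbitSlope field) flow
  apply_exp : ∀ w, L (exp w) ∈ source → X (L (exp w)) = L (exp w * field w)
  apply_zero : X 0 = 0

namespace PolarForm

variable {X X' : ℝ × ℝ → ℝ × ℝ} {L' : ℂ ≃L[ℝ] ℝ × ℝ} (D : PolarForm X L) (E : PolarForm X' L')
  (h : ℝ ≃o ℝ) {σ θ : ℝ}

/-- The point of angle `θ` on the orbit of `D.field` through the point `σ` of the real axis. -/
def logLeaf (σ θ : ℝ) : ℂ := D.flow θ σ + θ * I

/-- The point of angle `θ` on the orbit of `X` labelled by `σ`, where the orbit crosses the ray of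
angle zero at distance `exp σ` from the origin (all measured in the chart `L`). -/
def leaf (σ θ : ℝ) : ℝ × ℝ := L (exp (D.logLeaf σ θ))

/-- The label of the orbit of `X` through a point of the half-plane. -/
def label (p : ℝ × ℝ) : ℝ :=
  (D.flow (upperLog (L.symm p)).im).symm (upperLog (L.symm p)).re

theorem logLeaf_im : (D.logLeaf σ θ).im = θ := by simp [logLeaf]

theorem logLeaf_re : (D.logLeaf σ θ).re = D.flow θ σ := by simp [logLeaf]

theorem logLeaf_label_angle : D.logLeaf (D.label p) (chartAngle L p) = upperLog (L.symm p) := by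
  rw [logLeaf, label, chartAngle, OrderIso.apply_symm_apply, re_add_im]

theorem upperLog_symm_leaf (hθ : θ ∈ Icc 0 Real.pi) :
    upperLog (L.symm (D.leaf σ θ)) = D.logLeaf σ θ := by
  rw [leaf, L.symm_apply_apply, upperLog_exp (by rwa [logLeaf_im])]

theorem leaf_label_angle (hp : p ≠ 0) : D.leaf (D.label p) (chartAngle L p) = p := by
  rw [leaf, logLeaf_label_angle, exp_upperLog (by simpa using hp), L.apply_symm_apply]

theorem chartAngle_leaf (hθ : θ ∈ Icc 0 Real.pi) : chartAngle L (D.leaf σ θ) = θ := by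
  rw [chartAngle, D.upperLog_symm_leaf hθ, logLeaf_im]

theorem label_leaf (hθ : θ ∈ Icc 0 Real.pi) : D.label (D.leaf σ θ) = σ := by
  rw [label, D.upperLog_symm_leaf hθ, logLeaf_im, logLeaf_re, OrderIso.symm_apply_apply]

theorem leaf_ne_zero : D.leaf σ θ ≠ 0 := by simp [leaf]

theorem leaf_mem_halfPlane (hθ : θ ∈ Icc 0 Real.pi) : D.leaf σ θ ∈ halfPlane L := by
  have him : (exp (D.logLeaf σ θ)).im = Real.exp (D.flow θ σ) * Real.sin θ := by
    rw [exp_im, logLeaf_re, logLeaf_im]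
  rw [halfPlane, mem_ofPred_eq, leaf, L.symm_apply_apply, him]
  exact mul_nonneg (Real.exp_nonneg _) (Real.sin_nonneg_of_mem_Icc hθ)

theorem leaf_zero : D.leaf σ 0 = L (Real.exp σ) := by
  simp [leaf, logLeaf, D.isScalarFlow.zero_apply]

theorem leaf_pi : D.leaf σ Real.pi = L (-Real.exp (D.flow Real.pi σ)) := by
  rw [leaf, logLeaf, exp_add, exp_pi_mul_I, mul_neg_one, ofReal_exp]

theorem continuous_leaf : Continuous fun q : ℝ × ℝ => D.leaf q.1 q.2 := by
  have hflow : Continuous fun q : ℝ × ℝ => D.flow q.2 q.1 :=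
    D.isScalarFlow.continuous.comp continuous_swap
  exact L.continuous.comp (continuous_exp.comp
    ((continuous_ofReal.comp hflow).add (by fun_prop)))

theorem continuousAt_label (hp : p ∈ halfPlane L) (h0 : p ≠ 0) : ContinuousAt D.label p :=
  D.isScalarFlow.continuous_symm.continuousAt.comp (f := fun p => (chartAngle L p, _))
    ((continuousAt_chartAngle hp h0).prodMk
      (continuous_re.continuousAt.comp (continuousAt_upperLog_symm hp h0)))

theorem exists_abs_flow_sub_le : ∃ B, ∀ θ ∈ Icc 0 Real.pi, ∀ σ, |D.flow θ σ - σ| ≤ B := by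
  obtain ⟨B, hB⟩ := D.isRotating.exists_norm_orbitSlope_le
  refine ⟨B * Real.pi, fun θ hθ σ => ?_⟩
  have hle := D.isScalarFlow.abs_sub_sub_le (ρ := 0) (by simpa using hB) θ σ
  rw [zero_mul, sub_zero, abs_of_nonneg hθ.1] at hle
  exact hle.trans (mul_le_mul_of_nonneg_left hθ.2 B.coe_nonneg)

theorem tendsto_label : Tendsto D.label (nhdsWithin 0 (halfPlane L \ {0})) atBot := by
  obtain ⟨B, hB⟩ := D.exists_abs_flow_sub_le
  have hlog : Tendsto (fun p => Real.log ‖L.symm p‖ + B) (nhdsWithin 0 (halfPlane L \ {0}))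
      atBot := by
    refine tendsto_atBot_add_const_right _ _ (Real.tendsto_log_nhdsNE_zero.comp
      (tendsto_nhdsWithin_iff.2 ⟨?_, ?_⟩))
    · exact tendsto_nhdsWithin_of_tendsto_nhds
        ((L.symm.continuous.norm.tendsto' 0 0 (by simp)))
    · filter_upwards [self_mem_nhdsWithin] with p hp
      simpa using hp.2
  refine tendsto_atBot_mono' _ ?_ hlog
  filter_upwards [self_mem_nhdsWithin] with p hp
  have hre : Real.log ‖L.symm p‖ = D.flow (chartAngle L p) (D.label p) := by
    rw [← D.logLeaf_re, logLeaf_label_angle, ← Real.log_exp (upperLog _).re, ← norm_exp,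
      exp_upperLog (by simpa using hp.2)]
  have hle := hB _ (chartAngle_mem_Icc hp.1) (D.label p)
  rw [abs_le] at hle
  linarith [hle.1]

theorem tendsto_leaf :
    Tendsto (fun q : ℝ × ℝ => D.leaf q.1 q.2) (atBot ×ˢ 𝓟 (Icc 0 Real.pi)) (nhds 0) := by
  obtain ⟨B, hB⟩ := D.exists_abs_flow_sub_le
  have hexp : Tendsto (fun q : ℝ × ℝ => exp (D.logLeaf q.1 q.2)) (atBot ×ˢ 𝓟 (Icc 0 Real.pi))
      (nhds 0) := by
    refine squeeze_zero_norm' (a := fun q : ℝ × ℝ => Real.exp (q.1 + B)) ?_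
      (Real.tendsto_exp_atBot.comp (tendsto_atBot_add_const_right _ _ tendsto_fst))
    filter_upwards [tendsto_snd.eventually (mem_principal_self _)] with q hq
    rw [norm_exp, logLeaf_re, Real.exp_le_exp]
    linarith [(abs_le.1 (hB q.2 hq q.1)).2]
  exact (L.continuous.tendsto' 0 0 (map_zero L)).comp hexp

/-- The map of the half-plane `halfPlane L` to `halfPlane L'` that preserves the angle and sends
the orbit of label `σ` to the orbit of label `h σ`. -/
def transition (p : ℝ × ℝ) : ℝ × ℝ :=
  if p = 0 then 0 else E.leaf (h (D.label p)) (chartAngle L p)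

theorem transition_zero : transition D E h 0 = 0 := if_pos rfl

theorem transition_of_ne_zero (hp : p ≠ 0) :
    transition D E h p = E.leaf (h (D.label p)) (chartAngle L p) := if_neg hp

theorem transition_leaf (hθ : θ ∈ Icc 0 Real.pi) :
    transition D E h (D.leaf σ θ) = E.leaf (h σ) θ := by
  rw [transition_of_ne_zero D E h D.leaf_ne_zero, D.label_leaf hθ, D.chartAngle_leaf hθ]

theorem mapsTo_transition : MapsTo (transition D E h) (halfPlane L) (halfPlane L') := by
  intro p hp
  by_cases h0 : p = 0
  · simp [h0, transition_zero, halfPlane]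
  · rw [transition_of_ne_zero D E h h0]
    exact E.leaf_mem_halfPlane (chartAngle_mem_Icc hp)

theorem leftInvOn_transition :
    LeftInvOn (transition E D h.symm) (transition D E h) (halfPlane L) := by
  intro p hp
  by_cases h0 : p = 0
  · rw [h0, transition_zero, transition_zero]
  · rw [transition_of_ne_zero D E h h0, transition_leaf E D h.symm (chartAngle_mem_Icc hp),
      h.symm_apply_apply, D.leaf_label_angle h0]

theorem continuousOn_transition : ContinuousOn (transition D E h) (halfPlane L) := by
  intro p hp
  rcases eq_or_ne p 0 with rfl | h0
  · rw [← continuousWithinAt_sdiff_self, ContinuousWithinAt, transition_zero]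
    have hcoord : Tendsto (fun p => (h (D.label p), chartAngle L p))
        (nhdsWithin 0 (halfPlane L \ {0})) (atBot ×ˢ 𝓟 (Icc 0 Real.pi)) :=
      (h.tendsto_atBot.comp D.tendsto_label).prodMk (tendsto_principal.2
        (eventually_nhdsWithin_of_forall fun p hp => chartAngle_mem_Icc hp.1))
    refine (E.tendsto_leaf.comp hcoord).congr' ?_
    filter_upwards [self_mem_nhdsWithin] with p hp
    exact (transition_of_ne_zero D E h hp.2).symm
  · have hcoord : ContinuousAt (fun p => (h (D.label p), chartAngle L p)) p :=
      (h.continuous.continuousAt.comp (D.continuousAt_label hp h0)).prodMk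
        (continuousAt_chartAngle hp h0)
    refine ((E.continuous_leaf.continuousAt.comp hcoord).congr ?_).continuousWithinAt
    filter_upwards [isOpen_ne.mem_nhds h0] with p hp
    exact (transition_of_ne_zero D E h hp).symm

theorem exists_norm_apply_le : ∃ C, ∀ p ∈ D.source, ‖X p‖ ≤ C * ‖p‖ := by
  obtain ⟨M, hM⟩ := D.isRotating.bounded
  refine ⟨‖(L : ℂ →L[ℝ] ℝ × ℝ)‖ * (‖(L.symm : ℝ × ℝ →L[ℝ] ℂ)‖ * M), fun p hp => ?_⟩
  rcases eq_or_ne p 0 with rfl | h0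
  · simp [D.apply_zero]
  obtain ⟨w, rfl⟩ : ∃ w, L (exp w) = p :=
    ⟨log (L.symm p), by rw [exp_log (by simpa using h0), L.apply_symm_apply]⟩
  have hexp : ‖exp w‖ ≤ ‖(L.symm : ℝ × ℝ →L[ℝ] ℂ)‖ * ‖L (exp w)‖ := by
    simpa using (L.symm : ℝ × ℝ →L[ℝ] ℂ).le_opNorm (L (exp w))
  calc ‖X (L (exp w))‖ ≤ ‖(L : ℂ →L[ℝ] ℝ × ℝ)‖ * (‖exp w‖ * ‖D.field w‖) := by
        rw [D.apply_exp w hp, ← norm_mul]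
        exact (L : ℂ →L[ℝ] ℝ × ℝ).le_opNorm _
    _ ≤ ‖(L : ℂ →L[ℝ] ℝ × ℝ)‖ * (‖(L.symm : ℝ × ℝ →L[ℝ] ℂ)‖ * ‖L (exp w)‖ * M) := by
        gcongr
        exact hM w
    _ = _ := by ring

theorem hasDerivAt_logLeaf (σ θ : ℝ) : HasDerivAt (D.logLeaf σ)
    ((D.field (D.logLeaf σ θ)).im⁻¹ • D.field (D.logLeaf σ θ)) θ := by
  have him := D.isRotating.im_pos (D.logLeaf σ θ)
  have hderiv := (D.isScalarFlow.hasDerivAt σ θ).ofReal_comp.add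
    ((hasDerivAt_id θ).ofReal_comp.mul_const I)
  refine hderiv.congr_deriv ?_
  have hslope : orbitSlope D.field θ (D.flow θ σ) =
      (D.field (D.logLeaf σ θ)).re / (D.field (D.logLeaf σ θ)).im := rfl
  rw [hslope]
  apply Complex.ext
  · simp [div_eq_inv_mul]
  · simp [him.ne']

theorem exists_timeChange_leaf (σ : ℝ) : ∃ T Ti : ℝ → ℝ, StrictMono T ∧ Continuous T ∧
    Function.LeftInverse Ti T ∧ ∀ θ, D.leaf σ θ ∈ D.source →
      HasDerivAt (fun u => D.leaf σ (Ti u)) (X (D.leaf σ θ)) (T θ) := by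
  have hcont : Continuous (D.logLeaf σ) := continuous_iff_continuousAt.2 fun θ =>
    (D.hasDerivAt_logLeaf σ θ).continuousAt
  obtain ⟨T, Ti, hmono, hT, hinv, hTi⟩ := exists_timeChange
    (continuous_im.comp (D.isRotating.continuous.comp hcont)) fun θ => D.isRotating.im_pos _
  refine ⟨T, Ti, hmono, hT, hinv, fun θ hθ => ?_⟩
  have him := (D.isRotating.im_pos (D.logLeaf σ θ)).ne'
  have hlog : HasDerivAt (fun u => D.logLeaf σ (Ti u)) (D.field (D.logLeaf σ θ)) (T θ) := by
    have hcomp := (D.hasDerivAt_logLeaf σ (Ti (T θ))).scomp (T θ) (hTi θ)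
    rw [hinv] at hcomp
    refine hcomp.congr_deriv ?_
    rw [Function.comp_apply, Function.comp_apply, smul_smul, mul_inv_cancel₀ him, one_smul]
  have hleaf := (L : ℂ →L[ℝ] ℝ × ℝ).hasFDerivAt.comp_hasDerivAt (T θ) hlog.cexp
  rw [hinv] at hleaf
  rw [leaf, D.apply_exp _ hθ]
  exact hleaf

section Solution

variable {γ : ℝ → ℝ × ℝ} {I : Set ℝ} (hI : I.OrdConnected) (hγ : IsSolutionOn X γ I)

section
include hI hγ

theorem eq_zero_of_isSolutionOn (hsource : ∀ t ∈ I, γ t ∈ D.source) {t₀ t : ℝ} (ht₀ : t₀ ∈ I)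
    (ht : t ∈ I) (h₀ : γ t₀ = 0) : γ t = 0 := by
  obtain ⟨C, hC⟩ := D.exists_norm_apply_le
  exact eq_zero_of_norm_deriv_le hI hγ (fun t ht => hC _ (hsource t ht)) ht₀ ht h₀

end

variable (hmem : ∀ t ∈ I, γ t ∈ D.source ∩ halfPlane L) (hne : ∀ t ∈ I, γ t ≠ 0)

include hγ hmem hne

theorem hasDerivAt_upperLog_symm_of_isSolutionOn {t : ℝ} (ht : t ∈ I) :
    HasDerivAt (fun t => upperLog (L.symm (γ t))) (D.field (upperLog (L.symm (γ t)))) t := by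
  have hz : L.symm (γ t) ≠ 0 := by simpa using hne t ht
  have hX : L.symm (X (γ t)) = L.symm (γ t) * D.field (upperLog (L.symm (γ t))) := by
    have happly := D.apply_exp (upperLog (L.symm (γ t)))
    rw [exp_upperLog hz, L.apply_symm_apply] at happly
    rw [happly (hmem t ht).1, L.symm_apply_apply]
  have hsymm := (L.symm : ℝ × ℝ →L[ℝ] ℂ).hasFDerivAt.comp_hasDerivAt t (hγ t ht)
  refine ((hasDerivAt_upperLog hz (hmem t ht).2).comp t hsymm).congr_deriv ?_
  rw [ContinuousLinearEquiv.coe_coe, hX, inv_mul_cancel_left₀ hz]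

theorem continuousOn_angle_of_isSolutionOn : ContinuousOn (fun t => chartAngle L (γ t)) I :=
  fun t ht => ((continuousAt_chartAngle (hmem t ht).2 (hne t ht)).comp
    (hγ t ht).continuousAt).continuousWithinAt

include hI

theorem strictMonoOn_angle_of_isSolutionOn : StrictMonoOn (fun t => chartAngle L (γ t)) I :=
  D.isRotating.strictMonoOn_im hI fun _ => D.hasDerivAt_upperLog_symm_of_isSolutionOn hγ hmem hne

theorem label_eq_of_isSolutionOn {t₀ t : ℝ} (ht₀ : t₀ ∈ I) (ht : t ∈ I) :
    D.label (γ t) = D.label (γ t₀) := by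
  rw [label, OrderIso.symm_apply_eq]
  refine D.isRotating.re_eq_flow_im D.isScalarFlow hI
    (fun _ => D.hasDerivAt_upperLog_symm_of_isSolutionOn hγ hmem hne) ht₀ ht ?_
  rw [label, OrderIso.apply_symm_apply]

end Solution

theorem mapsOrbits_transition {W W' : Set (ℝ × ℝ)} (hW : W ⊆ D.source ∩ halfPlane L)
    (hW' : W' ⊆ E.source) (hmaps : MapsTo (transition D E h) W W') :
    MapsOrbits X X' (transition D E h) W W' := by
  intro γ I hI hγ hγW
  rcases I.eq_empty_or_nonempty with rfl | ⟨t₀, ht₀⟩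
  · exact ⟨γ, ∅, id, ordConnected_empty, by simp [IsSolutionOn], by simp, bijOn_empty _,
      strictMono_id.strictMonoOn _, continuousOn_empty _, by simp⟩
  have hmem : ∀ t ∈ I, γ t ∈ D.source ∩ halfPlane L := fun t ht => hW (hγW t ht)
  by_cases hzero : ∃ t ∈ I, γ t = 0
  · obtain ⟨t₁, ht₁, h₁⟩ := hzero
    have hH : ∀ t ∈ I, transition D E h (γ t) = 0 := fun t ht => by
      rw [D.eq_zero_of_isSolutionOn hI hγ (fun t ht => (hmem t ht).1) ht₁ ht h₁, transition_zero]
    refine ⟨fun _ => 0, I, id, hI, fun t _ => ?_, fun t ht => ?_, bijOn_id I,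
      strictMono_id.strictMonoOn I, continuousOn_id, hH⟩
    · rw [E.apply_zero]; exact hasDerivAt_const t 0
    · exact hH t ht ▸ hmaps (hγW t ht)
  have hne : ∀ t ∈ I, γ t ≠ 0 := fun t ht h₀ => hzero ⟨t, ht, h₀⟩
  set σ := h (D.label (γ t₀))
  obtain ⟨T, Ti, hmono, hT, hinv, hTi⟩ := E.exists_timeChange_leaf σ
  have hH : ∀ t ∈ I, transition D E h (γ t) = E.leaf σ (chartAngle L (γ t)) := fun t ht => by
    rw [transition_of_ne_zero D E h (hne t ht), D.label_eq_of_isSolutionOn hI hγ hmem hne ht₀ ht]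
  have hleaf : ∀ t ∈ I, E.leaf σ (chartAngle L (γ t)) ∈ W' := fun t ht => hH t ht ▸ hmaps (hγW t ht)
  have hτc : ContinuousOn (fun t => T (chartAngle L (γ t))) I :=
    hT.comp_continuousOn (D.continuousOn_angle_of_isSolutionOn hγ hmem hne)
  have hτm : StrictMonoOn (fun t => T (chartAngle L (γ t))) I :=
    hmono.comp_strictMonoOn (D.strictMonoOn_angle_of_isSolutionOn hI hγ hmem hne)
  refine ⟨fun u => E.leaf σ (Ti u), _, _, (hI.isPreconnected.image _ hτc).ordConnected, ?_, ?_,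
    hτm.injOn.bijOn_image, hτm, hτc, fun t ht => ?_⟩
  · rintro _ ⟨t, ht, rfl⟩
    simp only [hinv (chartAngle L (γ t))]
    exact hTi _ (hW' (hleaf t ht))
  · rintro _ ⟨t, ht, rfl⟩
    simpa only [hinv (chartAngle L (γ t))] using hleaf t ht
  · simp only [hinv (chartAngle L (γ t)), hH t ht]

end PolarForm

end PolarForm

section ExistsPolarForm

open Complex

theorem exists_forall_abs_re_div_im_sub_le {lam : ℂ} {η : ℝ} (hlam : 0 < lam.im) (hη : 0 < η) :
    ∃ ε > 0, ∃ m > 0, ∀ v : ℂ, ‖v - lam‖ ≤ ε → m ≤ v.im ∧ |v.re / v.im - lam.re / lam.im| ≤ η := by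
  have hslope : ContinuousAt (fun v : ℂ => v.re / v.im) lam :=
    continuous_re.continuousAt.div continuous_im.continuousAt hlam.ne'
  have him : ∀ᶠ v in nhds lam, lam.im / 2 ≤ v.im :=
    continuous_im.continuousAt.eventually_const_le (half_lt_self hlam)
  obtain ⟨ε, hε, hsub⟩ := Metric.nhds_basis_closedBall.eventually_iff.1
    (him.and (hslope (Metric.closedBall_mem_nhds _ hη)))
  refine ⟨ε, hε, lam.im / 2, half_pos hlam, fun v hv => ?_⟩
  simpa [Real.dist_eq] using hsub (mem_closedBall_iff_norm.2 hv)

theorem isRotating_of_norm_sub_le {F : ℂ → ℂ} {lam : ℂ} {K : ℝ≥0} {ε m : ℝ}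
    (hF : LipschitzWith K F) (hε : ∀ w, ‖F w - lam‖ ≤ ε) (hm : 0 < m) (him : ∀ w, m ≤ (F w).im) :
    IsRotating F where
  lipschitz := ⟨K, hF⟩
  bounded := ⟨ε + ‖lam‖, fun w => (norm_le_norm_sub_add _ lam).trans (add_le_add_left (hε w) _)⟩
  exists_le_im := ⟨m, hm, him⟩

theorem exists_polarForm {X : ℝ × ℝ → ℝ × ℝ} {L : ℂ ≃L[ℝ] ℝ × ℝ} {A : ℝ × ℝ →L[ℝ] ℝ × ℝ}
    {s : Set (ℝ × ℝ)} {K : ℝ≥0} {lam : ℂ} {η : ℝ} (hs : s ∈ nhds 0) (hLip : LipschitzOnWith K X s)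
    (h0 : X 0 = 0) (hA : HasFDerivAt X A 0) (hAL : ∀ z, A (L z) = L (lam * z)) (hlam : 0 < lam.im)
    (hη : 0 < η) :
    ∃ D : PolarForm X L, ∀ σ,
      |D.flow Real.pi σ - σ - lam.re / lam.im * Real.pi| ≤ η * Real.pi := by
  obtain ⟨ε, hε, m, hm, hnear⟩ := exists_forall_abs_re_div_im_sub_le hlam hη
  have hL : Tendsto L (nhds 0) (nhds 0) := L.continuous.tendsto' 0 0 (map_zero L)
  have hfLip := L.symm.lipschitz.lipschitzOnWith.comp
    (hLip.comp (L.lipschitz.lipschitzOnWith (s := L ⁻¹' s)) (mapsTo_preimage _ _))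
    (mapsTo_univ _ _)
  have hlin : (fun z => L.symm (X (L z)) - lam * z) =o[nhds 0] fun z => z := by
    have hX : (fun p => X p - A p) =o[nhds 0] fun p => p := by simpa [h0] using hA.isLittleO
    refine (((L.symm : ℝ × ℝ →L[ℝ] ℂ).isBigO_comp _ _).trans_isLittleO
      ((hX.comp_tendsto hL).trans_isBigO ((L : ℂ →L[ℝ] ℝ × ℝ).isBigO_id _))).congr_left fun z => ?_
    simp [hAL]
  obtain ⟨F, hFLip, hFlam, hFeq⟩ := exists_lipschitzWith_eq_logField (hL hs) hfLip
    (by simp [h0]) hlin hε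
  have hF := isRotating_of_norm_sub_le hFLip hFlam hm fun w => (hnear _ (hFlam w)).1
  obtain ⟨S, hS⟩ := hF.exists_isScalarFlow
  refine ⟨⟨_, F, S, (L.symm.continuous.tendsto' 0 0 (map_zero _)).eventually hFeq, hF, hS,
    fun w hw => ?_, h0⟩, fun σ => ?_⟩
  · rw [hw w (L.symm_apply_apply _).symm, logField, mul_div_cancel₀ _ (exp_ne_zero w)]
    simp
  · simpa [abs_of_pos Real.pi_pos] using
      hS.abs_sub_sub_le (fun θ s => (hnear _ (hFlam _)).2) Real.pi σ

end ExistsPolarForm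

section Gluing

variable {X Y X' Y' : ℝ × ℝ → ℝ × ℝ} {S : Set (ℝ × ℝ)} {f f' g g' H H' : ℝ × ℝ → ℝ × ℝ}

theorem MapsOrbits.congr {W W' : Set (ℝ × ℝ)} (hf : MapsOrbits X X' f W W') (heq : EqOn H f W) :
    MapsOrbits X X' H W W' := by
  intro γ I hI hγ hγW
  obtain ⟨δ, J, τ, hJ, hδ, hδW, hτ, hmono, hcont, hconj⟩ := hf γ I hI hγ hγW
  exact ⟨δ, J, τ, hJ, hδ, hδW, hτ, hmono, hcont, fun t ht => (heq (hγW t ht)).trans (hconj t ht)⟩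

/-- One half of a local equivalence on the set `S`: `f` is a continuous map of `S` to itself with
left inverse `f'`, and near the origin it maps orbits of `X` in `S` to orbits of `X'`. The
neighbourhoods are left to be shrunk, since the two sides of `Σ` must be given common ones. -/
structure IsOrbitMapOn (X X' : ℝ × ℝ → ℝ × ℝ) (S : Set (ℝ × ℝ)) (f f' : ℝ × ℝ → ℝ × ℝ) :
    Prop where
  continuousOn : ContinuousOn f S
  mapsTo : MapsTo f S S
  leftInvOn : LeftInvOn f' f S
  apply_zero : f 0 = 0
  mapsOrbits : ∃ U ∈ nhds 0, ∃ V ∈ nhds 0, ∀ W ⊆ U ∩ S, ∀ W' ⊆ V, MapsTo f W W' →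
    MapsOrbits X X' f W W'

theorem IsOrbitMapOn.congr (hf : IsOrbitMapOn X X' S f f') (h0 : 0 ∈ S) (heq : EqOn H f S)
    (heq' : EqOn H' f' S) : IsOrbitMapOn X X' S H H' where
  continuousOn := hf.continuousOn.congr heq
  mapsTo := hf.mapsTo.congr heq.symm
  leftInvOn p hp := by rw [heq hp, heq' (hf.mapsTo hp), hf.leftInvOn hp]
  apply_zero := (heq h0).trans hf.apply_zero
  mapsOrbits := by
    obtain ⟨U, hU, V, hV, hmaps⟩ := hf.mapsOrbits
    refine ⟨U, hU, V, hV, fun W hW W' hW' hWW' => ?_⟩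
    have heqW : EqOn H f W := heq.mono fun p hp => (hW hp).2
    exact (hmaps W hW W' hW' (hWW'.congr heqW)).congr heqW

theorem IsOrbitMapOn.continuous (hX : IsOrbitMapOn X X' {p | 0 ≤ p.2} H H')
    (hY : IsOrbitMapOn Y Y' {p | p.2 ≤ 0} H H') : Continuous H := by
  have hcover : {p : ℝ × ℝ | 0 ≤ p.2} ∪ {p | p.2 ≤ 0} = univ :=
    eq_univ_of_forall fun p => le_total 0 p.2
  rw [← continuousOn_univ, ← hcover]
  exact hX.continuousOn.union_of_isClosed hY.continuousOn
    (isClosed_le continuous_const continuous_snd) (isClosed_le continuous_snd continuous_const)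

theorem IsOrbitMapOn.leftInverse (hX : IsOrbitMapOn X X' {p | 0 ≤ p.2} H H')
    (hY : IsOrbitMapOn Y Y' {p | p.2 ≤ 0} H H') : Function.LeftInverse H' H :=
  fun p => (le_total 0 p.2).elim (fun hp => hX.leftInvOn hp) fun hp => hY.leftInvOn hp

theorem IsOrbitMapOn.mapsTo_axis (hX : IsOrbitMapOn X X' {p | 0 ≤ p.2} H H')
    (hY : IsOrbitMapOn Y Y' {p | p.2 ≤ 0} H H') : MapsTo H {p | p.2 = 0} {p | p.2 = 0} :=
  fun _ hp => le_antisymm (hY.mapsTo (le_of_eq hp)) (hX.mapsTo (ge_of_eq hp))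

theorem localSigmaEquiv_of_isOrbitMapOn (hX : IsOrbitMapOn X X' {p | 0 ≤ p.2} H H')
    (hY : IsOrbitMapOn Y Y' {p | p.2 ≤ 0} H H') (hX' : IsOrbitMapOn X' X {p | 0 ≤ p.2} H' H)
    (hY' : IsOrbitMapOn Y' Y {p | p.2 ≤ 0} H' H) : LocalSigmaEquiv X Y X' Y' := by
  obtain ⟨U₁, hU₁, V₁, hV₁, hmaps₁⟩ := hX.mapsOrbits
  obtain ⟨U₂, hU₂, V₂, hV₂, hmaps₂⟩ := hY.mapsOrbits
  obtain ⟨V₃, hV₃, U₃, hU₃, hmaps₃⟩ := hX'.mapsOrbits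
  obtain ⟨V₄, hV₄, U₄, hU₄, hmaps₄⟩ := hY'.mapsOrbits
  set U := U₁ ∩ U₂ ∩ (U₃ ∩ U₄)
  set V := V₁ ∩ V₂ ∩ (V₃ ∩ V₄)
  have hU : U ∈ nhds 0 := inter_mem (inter_mem hU₁ hU₂) (inter_mem hU₃ hU₄)
  have hV : V ∈ nhds 0 := inter_mem (inter_mem hV₁ hV₂) (inter_mem hV₃ hV₄)
  have hH := hX.continuous hY
  have hH' := hX'.continuous hY'
  have hleft := hX.leftInverse hY
  have hright := hX'.leftInverse hY'
  have hUV : MapsTo H (U ∩ H ⁻¹' V) (V ∩ H' ⁻¹' U) := fun p hp =>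
    ⟨hp.2, by simpa [hleft p] using hp.1⟩
  have hVU : MapsTo H' (V ∩ H' ⁻¹' U) (U ∩ H ⁻¹' V) := fun p hp =>
    ⟨hp.2, by simpa [hright p] using hp.1⟩
  have haxis := hUV.inter_inter (hX.mapsTo_axis hY)
  have haxis' := hVU.inter_inter (hX'.mapsTo_axis hY')
  refine ⟨U ∩ H ⁻¹' V, V ∩ H' ⁻¹' U, H, H', ?_, ?_, hH.continuousOn, hH'.continuousOn,
    InvOn.bijOn ⟨hleft.leftInvOn _, hright.leftInvOn _⟩ hUV hVU, fun p _ => hleft p,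
    fun p _ => hright p, hX.apply_zero,
    haxis.image_subset.antisymm fun p hp => ⟨H' p, haxis' hp, hright p⟩,
    hmaps₁ _ (fun p hp => ⟨hp.1.1.1.1, hp.2⟩) _ (fun p hp => hp.1.1.1.1)
      (hUV.inter_inter hX.mapsTo),
    hmaps₂ _ (fun p hp => ⟨hp.1.1.1.2, hp.2⟩) _ (fun p hp => hp.1.1.1.2)
      (hUV.inter_inter hY.mapsTo),
    hmaps₃ _ (fun p hp => ⟨hp.1.1.2.1, hp.2⟩) _ (fun p hp => hp.1.1.2.1)
      (hVU.inter_inter hX'.mapsTo),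
    hmaps₄ _ (fun p hp => ⟨hp.1.1.2.2, hp.2⟩) _ (fun p hp => hp.1.1.2.2)
      (hVU.inter_inter hY'.mapsTo)⟩
  · exact inter_mem hU (hH.continuousAt.preimage_mem_nhds (hX.apply_zero.symm ▸ hV))
  · exact inter_mem hV (hH'.continuousAt.preimage_mem_nhds (hX'.apply_zero.symm ▸ hU))

/-- The map equal to `f` on the closed upper half-plane and to `g` below it. -/
def glue (f g : ℝ × ℝ → ℝ × ℝ) (p : ℝ × ℝ) : ℝ × ℝ := if 0 ≤ p.2 then f p else g p

theorem eqOn_glue_upper : EqOn (glue f g) f {p | 0 ≤ p.2} := fun _ hp => if_pos hp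

theorem eqOn_glue_lower (heq : EqOn f g {p | p.2 = 0}) : EqOn (glue f g) g {p | p.2 ≤ 0} := by
  intro p (hp : p.2 ≤ 0)
  rcases hp.lt_or_eq with hneg | hzero
  · exact if_neg hneg.not_ge
  · rw [eqOn_glue_upper hzero.ge, heq hzero]

theorem localSigmaEquiv_of_eqOn_axis (hX : IsOrbitMapOn X X' {p | 0 ≤ p.2} f f')
    (hY : IsOrbitMapOn Y Y' {p | p.2 ≤ 0} g g') (hX' : IsOrbitMapOn X' X {p | 0 ≤ p.2} f' f)
    (hY' : IsOrbitMapOn Y' Y {p | p.2 ≤ 0} g' g) (heq : EqOn f g {p | p.2 = 0})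
    (heq' : EqOn f' g' {p | p.2 = 0}) : LocalSigmaEquiv X Y X' Y' :=
  localSigmaEquiv_of_isOrbitMapOn
    (hX.congr (le_refl (0 : ℝ)) eqOn_glue_upper eqOn_glue_upper)
    (hY.congr (le_refl (0 : ℝ)) (eqOn_glue_lower heq) (eqOn_glue_lower heq'))
    (hX'.congr (le_refl (0 : ℝ)) eqOn_glue_upper eqOn_glue_upper)
    (hY'.congr (le_refl (0 : ℝ)) (eqOn_glue_lower heq') (eqOn_glue_lower heq))

end Gluing

section ChartPair

variable {L M : ℂ ≃L[ℝ] ℝ × ℝ}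

/-- The linear charts `L` and `M` carry the upper half-plane to the two sides of `Σ`, and agree on
`Σ` up to the rotation by `π`. -/
structure IsChartPair (L M : ℂ ≃L[ℝ] ℝ × ℝ) : Prop where
  upper : halfPlane L = {p | 0 ≤ p.2}
  lower : halfPlane M = {p | p.2 ≤ 0}
  apply_ofReal : ∀ x : ℝ, M x = L (-x)

theorem IsChartPair.exists_eq_apply_ofReal (hLM : IsChartPair L M) {p : ℝ × ℝ} (hp : p.2 = 0) :
    ∃ x : ℝ, p = L x := by
  have hmem : p ∈ halfPlane L := hLM.upper ▸ hp.ge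
  have hmem' : -p ∈ halfPlane L := hLM.upper ▸ (neg_eq_zero.2 hp).ge
  rw [halfPlane, mem_ofPred_eq, map_neg, Complex.neg_im, neg_nonneg] at hmem'
  refine ⟨(L.symm p).re, (L.symm_apply_eq.1 ?_)⟩
  exact Complex.ext rfl (le_antisymm hmem' hmem)

end ChartPair

namespace PolarForm

open Complex

variable {X Y X' Y' : ℝ × ℝ → ℝ × ℝ} {L M L' M' : ℂ ≃L[ℝ] ℝ × ℝ}

theorem isOrbitMapOn_transition {S : Set (ℝ × ℝ)} (D : PolarForm X L) (E : PolarForm X' L')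
    (h : ℝ ≃o ℝ) (hL : halfPlane L = S) (hL' : halfPlane L' = S) :
    IsOrbitMapOn X X' S (transition D E h) (transition E D h.symm) where
  continuousOn := hL ▸ continuousOn_transition D E h
  mapsTo _ hp := hL' ▸ mapsTo_transition D E h (hL ▸ hp)
  leftInvOn := hL ▸ leftInvOn_transition D E h
  apply_zero := transition_zero D E h
  mapsOrbits := ⟨D.source, D.source_mem, E.source, E.source_mem,
    fun _ hW _ hW' => mapsOrbits_transition D E h (hL ▸ hW) hW'⟩

theorem transition_leaf_pi_eq {D₁ : PolarForm X L} {D₂ : PolarForm Y M} {E₁ : PolarForm X' L'}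
    {E₂ : PolarForm Y' M'} {h₁ h₂ : ℝ ≃o ℝ} {σ : ℝ} (hLM : ∀ x : ℝ, M x = L (-x))
    (hLM' : ∀ x : ℝ, M' x = L' (-x))
    (hflow : h₂ (D₁.flow Real.pi σ) = E₁.flow Real.pi (h₁ σ)) :
    transition D₁ E₁ h₁ (D₁.leaf σ Real.pi) = transition D₂ E₂ h₂ (D₁.leaf σ Real.pi) := by
  have hleaf : D₁.leaf σ Real.pi = D₂.leaf (D₁.flow Real.pi σ) 0 := by
    rw [leaf_pi, leaf_zero, hLM]
  calc transition D₁ E₁ h₁ (D₁.leaf σ Real.pi) = E₁.leaf (h₁ σ) Real.pi :=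
        transition_leaf D₁ E₁ h₁ ⟨Real.pi_pos.le, le_rfl⟩
    _ = E₂.leaf (h₂ (D₁.flow Real.pi σ)) 0 := by rw [leaf_pi, leaf_zero, hLM', hflow]
    _ = transition D₂ E₂ h₂ (D₁.leaf σ Real.pi) := by
        rw [hleaf, transition_leaf D₂ E₂ h₂ ⟨le_rfl, Real.pi_pos.le⟩]

theorem exists_leaf_pi_eq (D : PolarForm X L) {x : ℝ} (hx : 0 < x) :
    ∃ σ, L (-x) = D.leaf σ Real.pi :=
  ⟨(D.flow Real.pi).symm (Real.log x), by
    rw [leaf_pi, OrderIso.apply_symm_apply, Real.exp_log hx]⟩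

theorem transition_apply_ofReal_eq {D₁ : PolarForm X L} {D₂ : PolarForm Y M}
    {E₁ : PolarForm X' L'} {E₂ : PolarForm Y' M'} {h₁ h₂ : ℝ ≃o ℝ}
    (hLM : ∀ x : ℝ, M x = L (-x)) (hLM' : ∀ x : ℝ, M' x = L' (-x))
    (h₁₂ : ∀ σ, h₂ (D₁.flow Real.pi σ) = E₁.flow Real.pi (h₁ σ))
    (h₂₁ : ∀ σ, h₁ (D₂.flow Real.pi σ) = E₂.flow Real.pi (h₂ σ)) (x : ℝ) :
    transition D₁ E₁ h₁ (L x) = transition D₂ E₂ h₂ (L x) := by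
  have hML : ∀ x : ℝ, L x = M (-x) := fun x => by simpa using (hLM (-x)).symm
  have hML' : ∀ x : ℝ, L' x = M' (-x) := fun x => by simpa using (hLM' (-x)).symm
  rcases lt_trichotomy x 0 with hx | rfl | hx
  · obtain ⟨σ, hσ⟩ := D₁.exists_leaf_pi_eq (neg_pos.2 hx)
    rw [ofReal_neg, neg_neg] at hσ
    rw [hσ, transition_leaf_pi_eq hLM hLM' (h₁₂ σ)]
  · rw [ofReal_zero, map_zero, transition_zero, transition_zero]
  · obtain ⟨σ, hσ⟩ := D₂.exists_leaf_pi_eq hx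
    rw [hML, hσ, transition_leaf_pi_eq hML hML' (h₂₁ σ)]

/-- The return map of the ray of angle zero: the label of the orbit of `X` is continued across the
ray of angle `π` to the orbit of `Y`, whose chart is rotated by `π`. -/
def returnMap (D₁ : PolarForm X L) (D₂ : PolarForm Y M) : ℝ ≃o ℝ :=
  (D₁.flow Real.pi).trans (D₂.flow Real.pi)

theorem localSigmaEquiv_of_conj (D₁ : PolarForm X L) (D₂ : PolarForm Y M) (E₁ : PolarForm X' L')
    (E₂ : PolarForm Y' M') (hLM : IsChartPair L M) (hLM' : IsChartPair L' M') {h : ℝ ≃o ℝ}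
    (hconj : ∀ σ, h (returnMap D₁ D₂ σ) = returnMap E₁ E₂ (h σ)) :
    LocalSigmaEquiv X Y X' Y' := by
  set k := (D₁.flow Real.pi).symm.trans (h.trans (E₁.flow Real.pi)) with hk
  have hhk : ∀ σ, k (D₁.flow Real.pi σ) = E₁.flow Real.pi (h σ) := fun σ => by simp [hk]
  have hkh : ∀ σ, h (D₂.flow Real.pi σ) = E₂.flow Real.pi (k σ) := fun σ => by
    simpa [returnMap, hk] using hconj ((D₁.flow Real.pi).symm σ)
  have hhk' : ∀ σ, k.symm (E₁.flow Real.pi σ) = D₁.flow Real.pi (h.symm σ) := fun σ => by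
    rw [OrderIso.symm_apply_eq, hhk, h.apply_symm_apply]
  have hkh' : ∀ σ, h.symm (E₂.flow Real.pi σ) = D₂.flow Real.pi (k.symm σ) := fun σ => by
    rw [OrderIso.symm_apply_eq, hkh, k.apply_symm_apply]
  refine localSigmaEquiv_of_eqOn_axis (isOrbitMapOn_transition D₁ E₁ h hLM.upper hLM'.upper)
    (isOrbitMapOn_transition D₂ E₂ k hLM.lower hLM'.lower)
    (isOrbitMapOn_transition E₁ D₁ h.symm hLM'.upper hLM.upper)
    (isOrbitMapOn_transition E₂ D₂ k.symm hLM'.lower hLM.lower) (fun p hp => ?_) fun p hp => ?_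
  · obtain ⟨x, rfl⟩ := hLM.exists_eq_apply_ofReal hp
    exact transition_apply_ofReal_eq hLM.apply_ofReal hLM'.apply_ofReal hhk hkh x
  · obtain ⟨x, rfl⟩ := hLM'.exists_eq_apply_ofReal hp
    exact transition_apply_ofReal_eq hLM'.apply_ofReal hLM.apply_ofReal hhk' hkh' x

end PolarForm

section AxisChart

variable {κ m n : ℝ}

/-- The linear chart `z ↦ (κ re z + m im z, n im z)`: charts of this form are those that carry the
real axis to `Σ`. -/
def axisChart (κ m n : ℝ) (hκ : κ ≠ 0) (hn : n ≠ 0) : ℂ ≃L[ℝ] ℝ × ℝ :=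
  LinearEquiv.toContinuousLinearEquiv
    { toFun := fun z => (κ * z.re + m * z.im, n * z.im)
      invFun := fun p => ⟨(p.1 - m * (p.2 / n)) / κ, p.2 / n⟩
      map_add' := fun z w => by
        rw [Complex.add_re, Complex.add_im, Prod.mk_add_mk]
        ring_nf
      map_smul' := fun c z => by
        rw [Complex.smul_re, Complex.smul_im, RingHom.id_apply, Prod.smul_mk]
        simp only [smul_eq_mul]
        ring_nf
      left_inv := fun z => by simp [hκ, hn]
      right_inv := fun p => by
        ext
        · field_simp
          ring
        · field_simp }

theorem axisChart_apply (hκ : κ ≠ 0) (hn : n ≠ 0) (z : ℂ) :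
    axisChart κ m n hκ hn z = (κ * z.re + m * z.im, n * z.im) := rfl

theorem halfPlane_axisChart (hκ : κ ≠ 0) (hn : n ≠ 0) :
    halfPlane (axisChart κ m n hκ hn) = {p | 0 ≤ p.2 / n} := rfl

theorem isChartPair_axisChart {m' n' : ℝ} (hκ : κ ≠ 0) (hn : 0 < n) (hn' : n' < 0) :
    IsChartPair (axisChart κ m n hκ hn.ne') (axisChart (-κ) m' n' (neg_ne_zero.2 hκ) hn'.ne) where
  upper := by
    ext p
    simp [halfPlane_axisChart, le_div_iff₀ hn]
  lower := by
    ext p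
    simp [halfPlane_axisChart, le_div_iff_of_neg hn']
  apply_ofReal x := by simp [axisChart_apply]

end AxisChart

section Focus

variable {X Y : ℝ × ℝ → ℝ × ℝ} {κ η : ℝ}

theorem eig1_re_of_im_ne_zero (h : (eig1 X).im ≠ 0) : (eig1 X).re = trJ X / 2 := by
  unfold eig1 at *
  split_ifs at * with hdisc
  · exact absurd (Complex.ofReal_im _) h
  · simp

theorem eig1_im_nonneg : 0 ≤ (eig1 X).im := by
  unfold eig1
  split_ifs
  · exact (Complex.ofReal_im _).ge
  · simpa using div_nonneg (Real.sqrt_nonneg _) zero_le_two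

theorem four_mul_eig1_im_sq (h : (eig1 X).im ≠ 0) :
    4 * (eig1 X).im ^ 2 = 4 * detJ X - trJ X ^ 2 := by
  unfold eig1 at *
  split_ifs at * with hdisc
  · exact absurd (Complex.ofReal_im _) h
  · have hsq : √(4 * detJ X - trJ X ^ 2) ^ 2 = 4 * detJ X - trJ X ^ 2 :=
      Real.sq_sqrt (by linarith [not_le.1 hdisc])
    rw [Complex.add_im, Complex.ofReal_im, Complex.im_ofReal_mul, Complex.I_im]
    linear_combination hsq

theorem fderiv_zero_apply (X : ℝ × ℝ → ℝ × ℝ) (x y : ℝ) :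
    fderiv ℝ X 0 (x, y) = (jac11 X * x + jac12 X * y, jac21 X * x + jac22 X * y) := by
  have hxy : ((x, y) : ℝ × ℝ) = x • (1, 0) + y • (0, 1) := by simp
  rw [hxy, map_add, map_smul, map_smul]
  unfold jac11 jac12 jac21 jac22
  ext
  · simp only [Prod.zero_eq_mk, Prod.fst_add, Prod.smul_fst, smul_eq_mul]
    ring
  · simp only [Prod.zero_eq_mk, Prod.snd_add, Prod.smul_snd, smul_eq_mul]
    ring

theorem mul_pos_of_abs_sub_lt {a x : ℝ} (h : |x - a| < |a|) : 0 < a * x := by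
  nlinarith [sq_lt_sq.2 h, sq_nonneg x]

/-- The vector field `X` has a focus at the origin (possibly a weak one): the origin is a zero and
the eigenvalues of the Jacobian matrix there are not real. Lipschitz continuity near the origin and
differentiability there stand in for `C¹`. -/
structure IsFocus (X : ℝ × ℝ → ℝ × ℝ) : Prop where
  lipschitz : ∃ K, ∃ s ∈ nhds (0 : ℝ × ℝ), LipschitzOnWith K X s
  differentiableAt : DifferentiableAt ℝ X 0
  apply_zero : X 0 = 0
  eig1_im_ne_zero : (eig1 X).im ≠ 0

namespace IsFocus

theorem eig1_im_pos (hX : IsFocus X) : 0 < (eig1 X).im :=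
  eig1_im_nonneg.lt_of_ne' hX.eig1_im_ne_zero

theorem jac21_ne_zero (hX : IsFocus X) : jac21 X ≠ 0 := by
  intro hzero
  have hsq := four_mul_eig1_im_sq hX.eig1_im_ne_zero
  have hdisc : 4 * detJ X - trJ X ^ 2 = -(jac11 X - jac22 X) ^ 2 := by
    rw [detJ, trJ, hzero]
    ring
  nlinarith [hX.eig1_im_pos, sq_nonneg (jac11 X - jac22 X)]

theorem ellVal_eq (hX : IsFocus X) (hY : IsFocus Y) :
    ellVal X Y = (eig1 X).re / (eig1 X).im + (eig1 Y).re / (eig1 Y).im := by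
  rw [ellVal, if_pos (mul_ne_zero hX.eig1_im_ne_zero hY.eig1_im_ne_zero),
    abs_of_pos hX.eig1_im_pos, abs_of_pos hY.eig1_im_pos]

/-- The chart `axisChart κ _ _` in which the linearization of `X` at the origin is multiplication
by the eigenvalue `eig1 X`. -/
def chart (hX : IsFocus X) (hκ : κ ≠ 0) : ℂ ≃L[ℝ] ℝ × ℝ :=
  axisChart κ (κ * (jac11 X - jac22 X) / (2 * (eig1 X).im)) (κ * jac21 X / (eig1 X).im) hκ
    (div_ne_zero (mul_ne_zero hκ hX.jac21_ne_zero) hX.eig1_im_ne_zero)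

theorem fderiv_chart (hX : IsFocus X) (hκ : κ ≠ 0) (z : ℂ) :
    fderiv ℝ X 0 (hX.chart hκ z) = hX.chart hκ (eig1 X * z) := by
  have him := hX.eig1_im_ne_zero
  have hsq := four_mul_eig1_im_sq him
  rw [chart, axisChart_apply, axisChart_apply, fderiv_zero_apply, Complex.mul_re, Complex.mul_im,
    eig1_re_of_im_ne_zero him]
  unfold detJ trJ at *
  ext
  · field_simp
    linear_combination z.im * hsq
  · field_simp
    ring

theorem isChartPair_chart (hX : IsFocus X) (hY : IsFocus Y) (hκ : κ ≠ 0) (hκX : 0 < κ * jac21 X)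
    (hκY : 0 < κ * jac21 Y) : IsChartPair (hX.chart hκ) (hY.chart (neg_ne_zero.2 hκ)) :=
  isChartPair_axisChart hκ (div_pos hκX hX.eig1_im_pos)
    (div_neg_of_neg_of_pos (by linarith) hY.eig1_im_pos)

theorem exists_polarForm_chart (hX : IsFocus X) (hκ : κ ≠ 0) (hη : 0 < η) :
    ∃ D : PolarForm X (hX.chart hκ), ∀ σ,
      |D.flow Real.pi σ - σ - (eig1 X).re / (eig1 X).im * Real.pi| ≤ η * Real.pi := by
  obtain ⟨K, s, hs, hLip⟩ := hX.lipschitz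
  exact exists_polarForm hs hLip hX.apply_zero hX.differentiableAt.hasFDerivAt
    (hX.fderiv_chart hκ) hX.eig1_im_pos hη

theorem exists_returnMap_sub_pos (hX : IsFocus X) (hY : IsFocus Y)
    (hjac : 0 < jac21 X * jac21 Y) (hell : ellVal X Y ≠ 0) :
    ∃ (L M : ℂ ≃L[ℝ] ℝ × ℝ) (D₁ : PolarForm X L) (D₂ : PolarForm Y M), IsChartPair L M ∧
      ∀ σ, 0 < ellVal X Y * (PolarForm.returnMap D₁ D₂ σ - σ) := by
  have hκ := hX.jac21_ne_zero
  have hη : 0 < |ellVal X Y| / 4 := div_pos (abs_pos.2 hell) four_pos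
  obtain ⟨D₁, hD₁⟩ := hX.exists_polarForm_chart hκ hη
  obtain ⟨D₂, hD₂⟩ := hY.exists_polarForm_chart (neg_ne_zero.2 hκ) hη
  refine ⟨_, _, D₁, D₂, hX.isChartPair_chart hY hκ (mul_self_pos.2 hκ) hjac, fun σ => ?_⟩
  have hnear : |PolarForm.returnMap D₁ D₂ σ - σ - ellVal X Y * Real.pi| ≤
      |ellVal X Y| / 2 * Real.pi := by
    have h₁ := abs_le.1 (hD₁ σ)
    have h₂ := abs_le.1 (hD₂ (D₁.flow Real.pi σ))
    rw [PolarForm.returnMap, OrderIso.trans_apply]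
    nth_rewrite 1 [hX.ellVal_eq hY]
    exact abs_le.2 ⟨by linarith, by linarith⟩
  have hsmall : |ellVal X Y| / 2 * Real.pi < |ellVal X Y * Real.pi| := by
    rw [abs_mul, abs_of_pos Real.pi_pos]
    exact mul_lt_mul_of_pos_right (half_lt_self (abs_pos.2 hell)) Real.pi_pos
  have hpos := mul_pos_of_abs_sub_lt (hnear.trans_lt hsmall)
  rw [mul_right_comm] at hpos
  exact pos_of_mul_pos_left hpos Real.pi_pos.le

end IsFocus

theorem isFocus_of_contDiffAt (hX : ContDiffAt ℝ 1 X 0) (h0 : X 0 = 0) (him : (eig1 X).im ≠ 0) :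
    IsFocus X :=
  ⟨hX.exists_lipschitzOnWith, hX.differentiableAt one_ne_zero, h0, him⟩

end Focus

section LinearFocus

variable (α : ℝ)

/-- The linear focus `(x, y) ↦ (αx − y, x + αy)`, both components of the normal form `Z_ff`. -/
def linearFocus (p : ℝ × ℝ) : ℝ × ℝ := (α * p.1 - p.2, p.1 + α * p.2)

theorem contDiff_linearFocus : ContDiff ℝ 1 (linearFocus α) := by
  unfold linearFocus
  fun_prop

theorem fderiv_linearFocus : ⇑(fderiv ℝ (linearFocus α) (0, 0)) = linearFocus α := by
  let A : ℝ × ℝ →L[ℝ] ℝ × ℝ :=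
    (α • ContinuousLinearMap.fst ℝ ℝ ℝ - ContinuousLinearMap.snd ℝ ℝ ℝ).prod
      (ContinuousLinearMap.fst ℝ ℝ ℝ + α • ContinuousLinearMap.snd ℝ ℝ ℝ)
  exact congrArg DFunLike.coe (A.fderiv (x := (0, 0)))

theorem eig1_linearFocus : eig1 (linearFocus α) = ⟨α, 1⟩ := by
  have hdisc : trJ (linearFocus α) ^ 2 - 4 * detJ (linearFocus α) = -4 := by
    simp only [trJ, detJ, jac11, jac12, jac21, jac22, fderiv_linearFocus, linearFocus]
    ring
  have htr : trJ (linearFocus α) = 2 * α := by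
    simp [trJ, jac11, jac22, fderiv_linearFocus, linearFocus, two_mul]
  have hsqrt : √(4 * detJ (linearFocus α) - trJ (linearFocus α) ^ 2) = 2 := by
    rw [← neg_sub, hdisc, Real.sqrt_eq_iff_mul_self_eq] <;> norm_num
  rw [eig1, if_neg (by rw [hdisc]; norm_num), hsqrt, htr]
  apply Complex.ext <;> simp

theorem isFocus_linearFocus : IsFocus (linearFocus α) :=
  isFocus_of_contDiffAt (contDiff_linearFocus α).contDiffAt (by simp [linearFocus])
    (by simp [eig1_linearFocus])

theorem ellVal_linearFocus : ellVal (linearFocus α) (linearFocus α) = 2 * α := by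
  rw [(isFocus_linearFocus α).ellVal_eq (isFocus_linearFocus α), eig1_linearFocus]
  ring

theorem mul_ellVal_linearFocus_sign_pos {r : ℝ} (hr : r ≠ 0) :
    0 < r * ellVal (linearFocus r.sign) (linearFocus r.sign) := by
  rw [ellVal_linearFocus]
  linarith [Real.sign_mul_pos_of_ne_zero r hr]

end LinearFocus

theorem InOmega0.isFocus {U : Set (ℝ × ℝ)} {X Y : ℝ × ℝ → ℝ × ℝ} (hZ : InOmega0 U X Y)
    (hX : (eig1 X).im ≠ 0) (hY : (eig1 Y).im ≠ 0) : IsFocus X ∧ IsFocus Y := by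
  obtain ⟨hU, h0, hXU, hYU, hX0, hY0, -, -⟩ := hZ
  have hnhds : U ∈ nhds 0 := hU.mem_nhds h0
  exact ⟨isFocus_of_contDiffAt (hXU.contDiffAt hnhds) hX0 hX,
    isFocus_of_contDiffAt (hYU.contDiffAt hnhds) hY0 hY⟩

theorem stmt1_general {X Y X' Y' : ℝ × ℝ → ℝ × ℝ} (hX : IsFocus X) (hY : IsFocus Y)
    (hX' : IsFocus X') (hY' : IsFocus Y') (hjac : 0 < jac21 X * jac21 Y)
    (hjac' : 0 < jac21 X' * jac21 Y') (hell : 0 < ellVal X Y * ellVal X' Y') :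
    LocalSigmaEquiv X Y X' Y' := by
  obtain ⟨L, M, D₁, D₂, hLM, hD⟩ :=
    hX.exists_returnMap_sub_pos hY hjac (left_ne_zero_of_mul hell.ne')
  obtain ⟨L', M', E₁, E₂, hLM', hE⟩ :=
    hX'.exists_returnMap_sub_pos hY' hjac' (right_ne_zero_of_mul hell.ne')
  obtain ⟨h, hconj⟩ := exists_conj_of_mul_sub_pos hell hD hE
  exact D₁.localSigmaEquiv_of_conj D₂ E₁ E₂ hLM hLM' hconj

/-- Focus-focus case: a vector field in Ω₁ whose four eigenvalues are all non-real is
locally Σ-equivalent near the origin to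
`Z_ff = ((αx − y, x + αy), (αx − y, x + αy))` with `α = sign ℓ`. -/
theorem stmt1 (U : Set (ℝ × ℝ)) (X Y : ℝ × ℝ → ℝ × ℝ) (α : ℝ)
    (hZ : InOmega1 U X Y)
    (hff : (eig1 X).im ≠ 0 ∧ (eig2 X).im ≠ 0 ∧ (eig1 Y).im ≠ 0 ∧ (eig2 Y).im ≠ 0)
    (hα : α = Real.sign (ellVal X Y)) :
    LocalSigmaEquiv X Y
      (fun p : ℝ × ℝ => (α * p.1 - p.2, p.1 + α * p.2))
      (fun p : ℝ × ℝ => (α * p.1 - p.2, p.1 + α * p.2)) := by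
  obtain ⟨hX, hY⟩ := hZ.1.isFocus hff.1 hff.2.2.1
  obtain ⟨⟨-, -, -, -, -, -, -, hjac⟩, -, -, hell⟩ := hZ
  exact stmt1_general hX hY (isFocus_linearFocus α) (isFocus_linearFocus α) hjac
    (mul_self_pos.2 (isFocus_linearFocus α).jac21_ne_zero)
    (hα ▸ mul_ellVal_linearFocus_sign_pos hell)
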